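/- Let i ∈ {0,1} and let E be an i-rooted embanked state with h(N^{−1}(E)) = (h_1, h_2), and assume N(E) is weakly embanked. Then N(E) = E[ν_2(h_1)] if i = 0, and N(E) = E[ν_2(h_2 + 1) + 1] if i = 1; consequently N′(E) is (ν_2(h_1) mod 2)-rooted embanked if i = 0, and ((ν_2(h_2 + 1) + 1) mod 2)-rooted embanked if i = 1. -/

import Mathlib

/-!
Write an empty state as `E = (f ℓ, …, f 0)`. During a run of Increments `n` moves by one at each
step (down if `σ = -1`, up if `σ = +1`), so the entries of the states in the run depend only on
the current `n`: the entry `a_j` with `j ≥ 1` changes by the variation of `⟨n / 2^j⟩`, and `a_0`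
decreases by one per step. After the initial Zero rule `n = 2^ℓ - 1`, hence the two Halve rules
occur at `n = 2 h₁ + 1` and `n = 2 h₂`, where `h₁` is a function of `f 0` alone and `h₂` of `f 1`
alone (`Par`), and the entries of `N(E)` have the closed form `nextEntry` in `f`, `h₁`, `h₂`
(`TwoHalves.run`).

Suppose `N(E) = E[i]`. Passing from `E` to `E[i]`
* shifts the bump from `i` to `i - 2` if `i ≥ 2`, with `h₁` and `h₂` unchanged;
* replaces `h₁` by `h₁ - 1` if `i = 0`;
* replaces `h₂` by `h₂ + 1` if `i = 1`.
Since `⟨n / 2^j⟩` and `⟨(n + 1) / 2^j⟩` differ for exactly one `j ≥ 1`, namely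
`j = ν₂(n + 1) + 1`, the closed form gives `N(E[i]) = E[i][i']` with `i' = i - 2`, `i' = ν₂(h₁)`
and `i' = ν₂(h₂ + 1) + 1` respectively (`nextEntry_add2_of_two_le`, `nextEntry_add2_zero`,
`nextEntry_add2_one`).

The predicate `Good` collects what is preserved along the chain starting at `S_k`, so that every
rooted embanked state is `Good` (`chain`, `RootedEmbanked.good`). For `i ≥ 2` the parameters of
`E[i]` are automatically admissible; for `i ≤ 1` the only obstruction is `h₁ = 0` or
`h₂ = 2^ℓ - 1`, which weak embankedness of `N(E)` excludes. If `i' ≥ 2`, these extreme values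
cannot occur (`Good.edge1`, `Good.edge2`), which makes `N'(E)` embanked as well.

The predecessor `F` of `E` is an arbitrary empty state with `N(F) = F[i] = E`. That such an `F` is
embanked follows from the quantity `sum + length`, which grows by `2` under Zero and Overflow and
is otherwise constant (`embanked_of_next`); then `h₁(F)`, `h₂(F)` are the parameters of `F`, and
`Good.index` compares them with those of `E`.
-/

open scoped Classical

namespace Skelet17

/-- The five kinds of transition rules. -/
inductive Rule
  | overflow | halt | zero | halve | increment
  deriving DecidableEq

/-- A state `(a_ℓ, …, a_1, a_0)` (written left to right, `a_0` rightmost) is stored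
as the list `[a_0, a_1, …, a_ℓ]`, i.e. with the *rightmost* entry first. -/
abbrev State := List ℤ

/-- The leftmost entry `a_ℓ` of a state. -/
def leftmost (S : State) : ℤ := S.getLastD 0

/-- The entry `a_i(S)`. -/
def entry (S : State) (i : ℕ) : ℤ := S.getD i 0

/-- `ℓ(S) = |S| - 1`. -/
def ell (S : State) : ℕ := S.length - 1

/-- The Overflow rule applies: the leftmost entry is odd and all other entries are even. -/
def OverflowCond (S : State) : Prop := Odd (leftmost S) ∧ ∀ x ∈ S.dropLast, Even x

/-- The Halt rule applies: all entries are even and the two leftmost entries are `0`. -/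
def HaltCond (S : State) : Prop :=
  (∀ x ∈ S, Even x) ∧ S.getLastD 1 = 0 ∧ S.dropLast.getLastD 1 = 0

/-- The Zero rule applies: all entries are even and the Halt rule does not apply. -/
def ZeroCond (S : State) : Prop := (∀ x ∈ S, Even x) ∧ ¬ HaltCond S

/-- The Halve rule applies: `a_0 = -1` and none of the earlier rules applies. -/
def HalveCond (S : State) : Prop :=
  ¬ OverflowCond S ∧ ¬ HaltCond S ∧ ¬ ZeroCond S ∧ S.headD 0 = -1

/-- The rule applied to a state (the first matching rule). -/
noncomputable def ruleOf (S : State) : Rule :=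
  if OverflowCond S then .overflow
  else if HaltCond S then .halt
  else if ZeroCond S then .zero
  else if S.headD 0 = -1 then .halve
  else .increment

/-- The transition function `P`.  (On a Halt state the process stops; we set `P S = S` there.)
Recall the list stores `a_0` first, so e.g. the Overflow rule
`(2a_ℓ+1, 2a_{ℓ-1}, …, 2a_0) ↦ (0, 2a_ℓ+2, 2a_{ℓ-1}, …, 2a_0)` appends a `0` at the end of
the list and adds `1` to the previously last element. -/
noncomputable def P (S : State) : State :=
  match ruleOf S with
  | .overflow => S.dropLast ++ [leftmost S + 1, 0]
  | .halt => S
  | .zero => (S.set 0 (S.headD 0 - 1)).set (S.length - 1) (leftmost S + 1) ++ [0, 0]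
  | .halve => S.tail
  | .increment =>
      let i := S.findIdx (fun x => x % 2 != 0)   -- index of the rightmost odd entry
      (S.set (i + 1) (S.getD (i + 1) 0 + 1)).set 0 (S.headD 0 - 1)

/-- `S ↦ T` : some iterate of `P` sends `S` to `T`. -/
def Reaches (S T : State) : Prop := ∃ m : ℕ, P^[m] S = T

/-- `σ(S) = +1` if the sum of the entries is odd, `-1` if it is even. -/
noncomputable def sigma (S : State) : ℤ := if Odd S.sum then 1 else -1

/-- `n(S)`: the natural number whose Gray code digits (least significant first) are
`a_1 mod 2, a_2 mod 2, …, a_ℓ mod 2`.  Equivalently (standard Gray-code decoding),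
bit `i` of `n(S)` is the parity of `a_{i+1} + ⋯ + a_ℓ`. -/
def nOf (S : State) : ℕ :=
  ∑ i ∈ Finset.range (ell S),
    2 ^ i * ((∑ j ∈ Finset.Icc (i + 1) (ell S), entry S j) % 2).toNat

/-- `⟨a / 2^j⟩` : the nearest integer to `a / 2^j`, rounding half-integers up. -/
def nearest (j a : ℕ) : ℕ := (2 * a + 2 ^ j) / 2 ^ (j + 1)

/-- `d_j(a, b) = |⟨a/2^j⟩ - ⟨b/2^j⟩|`. -/
def dd (j a b : ℕ) : ℕ := Nat.dist (nearest j a) (nearest j b)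

/-- `S_k = (0, 2, 2^2, …, 2^{2k}, 0)`. -/
def Sk (k : ℕ) : State :=
  0 :: (((List.range (2 * k)).map fun i => (2 : ℤ) ^ (2 * k - i)) ++ [0])

/-- An empty state: `n(E) = 0`, `σ(E) = -1`, and the next rule applied is not Halt. -/
def IsEmptyState (E : State) : Prop :=
  E ≠ [] ∧ nOf E = 0 ∧ sigma E = -1 ∧ ruleOf E ≠ Rule.halt

/-- `m` is the first positive time at which the trajectory of `E` is at an empty state. -/
def NextEmptyAt (E : State) (m : ℕ) : Prop :=
  0 < m ∧ IsEmptyState (P^[m] E) ∧ ∀ t, 0 < t → t < m → ¬ IsEmptyState (P^[t] E)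

/-- `N(E)` : the next empty state after `E` (junk value `[]` if it does not exist). -/
noncomputable def N (E : State) : State :=
  if h : ∃ m, NextEmptyAt E m then P^[h.choose] E else []

/-- The rule applied at time `j` belongs to `T_E`, the sequence of rules from `E` to the
next empty state after `E` (all rules after `E` when no next empty state exists). -/
def InTE (E : State) (j : ℕ) : Prop := ∀ t, 0 < t → t ≤ j → ¬ IsEmptyState (P^[t] E)

/-- Weakly embanked: `T_E` consists of one Zero rule at the start and contains at least two
Halve rules, and all other rules before the second Halve rule are Increment rules. -/
def WeaklyEmbanked (E : State) : Prop :=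
  IsEmptyState E ∧
  ∃ j₁ j₂, 0 < j₁ ∧ j₁ < j₂ ∧ InTE E j₂ ∧
    ruleOf (P^[j₁] E) = Rule.halve ∧ ruleOf (P^[j₂] E) = Rule.halve ∧
    ∀ t, 0 < t → t < j₂ → t ≠ j₁ → ruleOf (P^[t] E) = Rule.increment

/-- Embanked: the next empty state `N(E)` exists and the non-Increment rules of `T_E` consist
of exactly one Zero rule at the start and exactly two Halve rules elsewhere. -/
def Embanked (E : State) : Prop :=
  IsEmptyState E ∧
  ∃ m j₁ j₂, NextEmptyAt E m ∧ 0 < j₁ ∧ j₁ < j₂ ∧ j₂ < m ∧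
    ruleOf (P^[j₁] E) = Rule.halve ∧ ruleOf (P^[j₂] E) = Rule.halve ∧
    ∀ t, 0 < t → t < m → t ≠ j₁ → t ≠ j₂ → ruleOf (P^[t] E) = Rule.increment

/-- `h_i(E)` (`i ∈ {1,2}`): the value of `n` at the state immediately *after* the `i`-th
Halve rule applied after `E`. -/
noncomputable def hVal (E : State) (i : ℕ) : ℕ :=
  nOf (P^[Nat.nth (fun j => ruleOf (P^[j] E) = Rule.halve) (i - 1) + 1] E)

/-- `s_i(E)` (`i ∈ {1,2}`): the value of `n` at the state immediately *before* the `i`-th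
Halve rule applied after `E`. -/
noncomputable def sVal (E : State) (i : ℕ) : ℕ :=
  nOf (P^[Nat.nth (fun j => ruleOf (P^[j] E) = Rule.halve) (i - 1)] E)

/-- `E[i]` : the state `E` with the entry `a_i` replaced by `a_i + 2`. -/
def bump (E : State) (i : ℕ) : State := E.set i (E.getD i 0 + 2)

/-- `N'(E) = N^{⌈(i+1)/2⌉}(E)` for an embanked state `E` with `N(E) = E[i]`
(junk value `E` if no such `i` exists). -/
noncomputable def N' (E : State) : State :=
  if h : ∃ i, i < E.length ∧ N E = bump E i then N^[(h.choose + 2) / 2] E else E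

/-- A rooted embanked state: an embanked state obtained from `S_k` by applying `N'`
some number of times. -/
def RootedEmbanked (k : ℕ) (E : State) : Prop :=
  Embanked E ∧ ∃ e : ℕ, N'^[e] (Sk k) = E

/-- `κ_{E→E'}(j)` : the number of steps `S ↦ N(S)` with `N(S) = S[j]` along the chain
`E, N(E), N²(E), …, N^[t](E) = E'`. -/
noncomputable def kappa (E : State) (t j : ℕ) : ℕ :=
  ((Finset.range t).filter fun s => N (N^[s] E) = bump (N^[s] E) j).card


/-! ### Nearest integers to dyadic fractions -/

lemma nearest_zero (n : ℕ) : nearest 0 n = n := by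
  simp only [nearest]; omega

lemma nearest_succ (j n : ℕ) : nearest (j + 1) n = (n + 2 ^ j) / 2 ^ (j + 1) := by
  unfold nearest
  rw [show 2 * n + 2 ^ (j + 1) = 2 * (n + 2 ^ j) by ring,
    show (2 : ℕ) ^ (j + 1 + 1) = 2 * 2 ^ (j + 1) by ring, Nat.mul_div_mul_left _ _ two_pos]

lemma nearest_one (n : ℕ) : nearest 1 n = (n + 1) / 2 := by
  rw [nearest_succ]; simp

lemma nearest_half (j n : ℕ) : nearest (j + 2) n = nearest (j + 1) (n / 2) := by
  rw [nearest_succ, nearest_succ,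
    show (2 : ℕ) ^ (j + 1 + 1) = 2 * 2 ^ (j + 1) by ring, ← Nat.div_div_eq_div_mul]
  congr 1
  rw [pow_succ]; omega

lemma nearest_double (j n : ℕ) : nearest (j + 1) (2 * n) = nearest j n := by
  rcases j with _ | j
  · rw [nearest_one, nearest_zero]; omega
  · rw [nearest_half]; congr 1; omega

lemma nearest_zero_right (j : ℕ) : nearest j 0 = 0 := by
  unfold nearest
  apply Nat.div_eq_of_lt
  rw [pow_succ]
  have := Nat.two_pow_pos j
  omega

lemma padicVal_eq_iff {m j : ℕ} (hm : m ≠ 0) :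
    padicValNat 2 m = j ↔ 2 ^ (j + 1) ∣ m + 2 ^ j := by
  have key : ∀ t, 2 ^ t ∣ m ↔ t ≤ padicValNat 2 m := fun t =>
    padicValNat_dvd_iff_le hm
  have h1 := key j
  have h2 := key (j + 1)
  have e : 2 ^ (j + 1) ∣ m + 2 ^ j ↔ (2 ^ j ∣ m ∧ ¬ 2 ^ (j + 1) ∣ m) := by
    constructor
    · rintro ⟨c, hc⟩
      have hc1 : c ≠ 0 := by
        rintro rfl
        have := Nat.two_pow_pos j
        omega
      obtain ⟨d, rfl⟩ := Nat.exists_eq_succ_of_ne_zero hc1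
      have hm2 : m = 2 ^ j * (2 * d + 1) := by
        rw [pow_succ] at hc
        have : m + 2 ^ j = 2 ^ j * (2 * d + 1) + 2 ^ j := by rw [hc, Nat.succ_eq_add_one]; ring
        omega
      refine ⟨⟨_, hm2⟩, ?_⟩
      rintro ⟨x, hx⟩
      rw [hm2, pow_succ, mul_assoc] at hx
      have := Nat.eq_of_mul_eq_mul_left (Nat.two_pow_pos j) hx
      omega
    · rintro ⟨⟨c, rfl⟩, h⟩
      rcases Nat.even_or_odd' c with ⟨d, rfl | rfl⟩
      · exact absurd ⟨d, by ring⟩ h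
      · exact ⟨d + 1, by ring⟩
  rw [e, h1, h2]
  omega

/-- In passing from `n` to `n + 1` exactly one Gray digit flips. -/
lemma nearest_succ_right (j n : ℕ) :
    nearest j (n + 1) = nearest j n + if j = 0 ∨ j = padicValNat 2 (n + 1) + 1 then 1 else 0 := by
  rcases j with _ | j
  · simp [nearest_zero]
  · rw [nearest_succ, nearest_succ, show n + 1 + 2 ^ j = (n + 2 ^ j) + 1 by ring, Nat.succ_div]
    congr 1
    have := padicVal_eq_iff (m := n + 1) (j := j) (by omega)
    rw [show n + 1 + 2 ^ j = n + 2 ^ j + 1 by ring] at this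
    simp only [← this]
    congr 1
    simp only [eq_iff_iff]
    omega

lemma nearest_of_dvd {j m : ℕ} (h : 2 ^ j ∣ m) : nearest j m = m / 2 ^ j := by
  obtain ⟨c, rfl⟩ := h
  rcases j with _ | j
  · simp [nearest_zero]
  · rw [nearest_succ, Nat.mul_div_cancel_left _ (Nat.two_pow_pos _),
      Nat.mul_add_div (Nat.two_pow_pos _)]
    rw [Nat.div_eq_of_lt]
    · rfl
    · exact Nat.pow_lt_pow_right (by norm_num) (by omega)

lemma nearest_of_dvd_succ {j n : ℕ} (hj : j ≠ 0) (h : 2 ^ j ∣ n + 1) :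
    nearest j n = (n + 1) / 2 ^ j := by
  have h1 := nearest_succ_right j n
  rw [nearest_of_dvd h] at h1
  have : padicValNat 2 (n + 1) + 1 ≠ j := by
    have := (padicValNat_dvd_iff_le (p := 2) (a := n + 1) (n := j) (by omega)).1 h
    omega
  rw [h1, if_neg]
  · rfl
  · omega

lemma nearest_top {ℓ j : ℕ} (hj : j ≠ 0) (h : j ≤ ℓ) :
    nearest j (2 ^ ℓ - 1) = 2 ^ (ℓ - j) := by
  have hp : 2 ^ ℓ - 1 + 1 = 2 ^ ℓ := Nat.sub_add_cancel Nat.one_le_two_pow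
  rw [nearest_of_dvd_succ hj, hp, Nat.pow_div h two_pos]
  rw [hp]; exact pow_dvd_pow _ h

lemma nearest_small {ℓ j : ℕ} (h : ℓ < j) : nearest j (2 ^ ℓ - 1) = 0 := by
  obtain ⟨i, rfl⟩ : ∃ i, j = i + 1 := ⟨j - 1, by omega⟩
  rw [nearest_succ]
  apply Nat.div_eq_of_lt
  have h1 : 2 ^ ℓ ≤ 2 ^ i := Nat.pow_le_pow_right two_pos (by omega)
  have := Nat.two_pow_pos ℓ
  rw [pow_succ]; omega

/-! ### States as functions -/

/-- The state `(f ℓ, …, f 1, f 0)`. -/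
def st (ℓ : ℕ) (f : ℕ → ℤ) : State := (List.range (ℓ + 1)).map f

@[simp] lemma st_length (ℓ f) : (st ℓ f).length = ℓ + 1 := by simp [st]

lemma st_getElem {ℓ : ℕ} {f : ℕ → ℤ} {j : ℕ} (h : j < (st ℓ f).length) :
    (st ℓ f)[j] = f j := by simp [st]

lemma st_getD {ℓ : ℕ} {f : ℕ → ℤ} {j : ℕ} (h : j ≤ ℓ) : (st ℓ f).getD j 0 = f j := by
  rw [List.getD_eq_getElem _ _ (by simp; omega), st_getElem]

lemma st_ne_nil (ℓ f) : st ℓ f ≠ [] := by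
  intro h
  have := congrArg List.length h
  simp at this

lemma st_congr {ℓ : ℕ} {f g : ℕ → ℤ} (h : ∀ j ≤ ℓ, f j = g j) : st ℓ f = st ℓ g := by
  unfold st
  apply List.map_congr_left
  intro j hj
  exact h j (by simp at hj; omega)

lemma st_inj {ℓ : ℕ} {f g : ℕ → ℤ} (h : st ℓ f = st ℓ g) : ∀ j ≤ ℓ, f j = g j := by
  intro j hj
  rw [← st_getD (f := f) hj, h, st_getD hj]

lemma eq_st {S : State} {ℓ : ℕ} (h : S.length = ℓ + 1) : S = st ℓ (fun j => S.getD j 0) := by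
  apply List.ext_getElem
  · simp [h]
  · intro j h1 h2
    rw [st_getElem, List.getD_eq_getElem _ _ h1]

lemma st_succ (ℓ f) : st (ℓ + 1) f = f 0 :: st ℓ (fun j => f (j + 1)) := by
  simp [st, List.range_succ_eq_map]

lemma st_zero (f) : st 0 f = [f 0] := by simp [st]

lemma st_snoc (ℓ f) : st (ℓ + 1) f = st ℓ f ++ [f (ℓ + 1)] := by
  simp [st, List.range_succ]

lemma st_headD (ℓ f) (d : ℤ) : (st ℓ f).headD d = f 0 := by
  cases ℓ <;> simp [st_succ, st_zero]

lemma st_getLastD (ℓ f) (d : ℤ) : (st ℓ f).getLastD d = f ℓ := by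
  cases ℓ <;> simp [st_snoc, st_zero]

lemma st_dropLast (ℓ f) : (st (ℓ + 1) f).dropLast = st ℓ f := by simp [st_snoc]

lemma st_set {ℓ : ℕ} {f : ℕ → ℤ} (i : ℕ) (x : ℤ) :
    (st ℓ f).set i x = st ℓ (Function.update f i x) := by
  apply List.ext_getElem
  · simp
  · intro j h1 h2
    rw [List.getElem_set, st_getElem, st_getElem, Function.update_apply]
    simp only [eq_comm]

lemma forall_mem_st {ℓ : ℕ} {f : ℕ → ℤ} {p : ℤ → Prop} :
    (∀ x ∈ st ℓ f, p x) ↔ ∀ j ≤ ℓ, p (f j) := by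
  simp [st]

lemma st_bump {ℓ : ℕ} {f : ℕ → ℤ} {i : ℕ} :
    bump (st ℓ f) i = st ℓ (fun j => f j + if j = i then 2 else 0) := by
  unfold bump
  rw [st_set]
  apply st_congr
  intro j hj
  rw [Function.update_apply]
  split_ifs with h
  · subst h; rw [st_getD hj]
  · simp

lemma st_findIdx {ℓ : ℕ} {f : ℕ → ℤ} {i : ℕ} (hi : i ≤ ℓ) (ho : Odd (f i))
    (he : ∀ j < i, Even (f j)) : (st ℓ f).findIdx (fun x => x % 2 != 0) = i := by
  rw [List.findIdx_eq (by simp; omega)]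
  constructor
  · rw [st_getElem]
    have := Int.odd_iff.1 ho
    simp [this]
  · intro j hj
    rw [st_getElem]
    have := Int.even_iff.1 (he j hj)
    simp [this]

/-! ### The rules on states of the form `st ℓ f` -/

lemma overflow_iff {ℓ : ℕ} {f : ℕ → ℤ} :
    OverflowCond (st ℓ f) ↔ Odd (f ℓ) ∧ ∀ j < ℓ, Even (f j) := by
  unfold OverflowCond leftmost
  rw [st_getLastD]
  cases ℓ with
  | zero => simp [st_zero]
  | succ ℓ => rw [st_dropLast, forall_mem_st]; simp

lemma halt_iff {ℓ : ℕ} {f : ℕ → ℤ} (hl : 1 ≤ ℓ) :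
    HaltCond (st ℓ f) ↔ (∀ j ≤ ℓ, Even (f j)) ∧ f ℓ = 0 ∧ f (ℓ - 1) = 0 := by
  unfold HaltCond
  rw [st_getLastD, forall_mem_st]
  obtain ⟨m, rfl⟩ : ∃ m, ℓ = m + 1 := ⟨ℓ - 1, by omega⟩
  rw [st_dropLast, st_getLastD]
  simp

lemma rule_of_even {S : State} (h : ∀ x ∈ S, Even x) :
    ruleOf S = if HaltCond S then Rule.halt else Rule.zero := by
  have h1 : ¬ OverflowCond S ∨ S = [] := by
    rcases List.eq_nil_or_concat S with h0 | ⟨t, a, rfl⟩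
    · right; exact h0
    · left
      rintro ⟨ho, -⟩
      simp only [leftmost, List.concat_eq_append, List.getLastD_concat] at ho
      exact (Int.not_even_iff_odd.2 ho) (h a (by simp))
  have h1 : ¬ OverflowCond S := by
    rcases h1 with h1 | rfl
    · exact h1
    · rintro ⟨ho, -⟩
      simp [leftmost] at ho
  unfold ruleOf
  rw [if_neg h1]
  split_ifs with h2 h3
  · rfl
  · rfl
  all_goals exact absurd ⟨h, h2⟩ h3

lemma rule_zero_even {S : State} (h : ruleOf S = Rule.zero) : ∀ x ∈ S, Even x := by
  unfold ruleOf at h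
  split_ifs at h with h1 h2 h3
  exact h3.1

lemma rule_halve_head {S : State} (h : ruleOf S = Rule.halve) : S.headD 0 = -1 := by
  unfold ruleOf at h
  split_ifs at h with h1 h2 h3 h4
  exact h4

lemma nOf_nil : nOf [] = 0 := by simp [nOf, ell]

/-- Dropping the rightmost entry halves `n`. -/
lemma nOf_cons (a : ℤ) (t : State) : nOf (a :: t) = 2 * nOf t + (t.sum % 2).toNat := by
  have hsum : ∀ (t : State) , t.sum = ∑ j ∈ Finset.Icc 1 t.length, entry (a :: t) j := by
    intro t
    rw [← Finset.Ico_succ_right_eq_Icc, Finset.sum_Ico_eq_sum_range]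
    simp only [entry]
    rw [← Fin.sum_univ_getElem, Finset.sum_range]
    apply Finset.sum_congr rfl
    intro x _
    rw [add_comm, List.getD_cons_succ, List.getD_eq_getElem]
  unfold nOf ell
  simp only [List.length_cons, Nat.add_sub_cancel]
  rcases ht : t.length with _ | m
  · have : t = [] := List.length_eq_zero_iff.1 ht
    simp [this]
  · rw [Finset.sum_range_succ', hsum t, ht, Nat.add_sub_cancel, Finset.mul_sum]
    congr 1
    · apply Finset.sum_congr rfl
      intro i _
      rw [pow_succ, mul_comm (2 ^ i) 2, mul_assoc]
      congr 4
      rw [← Finset.image_add_right_Icc, Finset.sum_image (by intro x _ y _ h; simpa using h)]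
      simp [entry]
    · simp

lemma nOf_eq_zero_of_even {S : State} (h : ∀ x ∈ S, Even x) : nOf S = 0 ∧ Even S.sum := by
  induction S with
  | nil => simp [nOf_nil]
  | cons a t ih =>
    have ⟨h1, h2⟩ := ih (fun x hx => h x (by simp [hx]))
    refine ⟨?_, ?_⟩
    · rw [nOf_cons, h1, Int.even_iff.1 h2]; simp
    · rw [List.sum_cons]; exact (h a (by simp)).add h2

lemma even_of_nOf {S : State} (h : nOf S = 0) (hs : Even S.sum) : ∀ x ∈ S, Even x := by
  induction S with
  | nil => simp
  | cons a t ih =>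
    rw [nOf_cons] at h
    have h2 : Even t.sum := by rw [Int.even_iff]; omega
    have h3 := ih (by omega) h2
    rw [List.sum_cons] at hs
    intro x hx
    rcases List.mem_cons.1 hx with rfl | hx
    · exact (Int.even_add.1 hs).2 h2
    · exact h3 x hx

/-- Empty states are exactly the ones to which the Zero rule applies. -/
lemma isEmpty_iff {S : State} : IsEmptyState S ↔ S ≠ [] ∧ ruleOf S = Rule.zero := by
  constructor
  · rintro ⟨h0, h1, h2, h3⟩
    have hs : Even S.sum := by
      unfold sigma at h2
      split_ifs at h2 with h
      · exact Int.not_odd_iff_even.1 h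
    have he := even_of_nOf h1 hs
    have hr := rule_of_even he
    split_ifs at hr with hh
    · exact absurd hr h3
    · exact ⟨h0, hr⟩
  · rintro ⟨h0, h1⟩
    have ⟨h2, h3⟩ := nOf_eq_zero_of_even (rule_zero_even h1)
    refine ⟨h0, h2, ?_, by rw [h1]; decide⟩
    unfold sigma
    rw [if_neg (Int.not_odd_iff_even.2 h3)]

lemma st_isEmpty_iff {ℓ f} (hl : 1 ≤ ℓ) :
    ruleOf (st ℓ f) = Rule.zero ↔ (∀ j ≤ ℓ, Even (f j)) ∧ (f ℓ ≠ 0 ∨ f (ℓ - 1) ≠ 0) := by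
  constructor
  · intro h
    have he := rule_zero_even h
    have he' := forall_mem_st.1 he
    refine ⟨he', ?_⟩
    by_contra hc
    push Not at hc
    rw [rule_of_even he, if_pos ((halt_iff hl).2 ⟨he', hc⟩)] at h
    cases h
  · rintro ⟨h1, h2⟩
    rw [rule_of_even (forall_mem_st.2 h1), if_neg]
    rw [halt_iff hl]
    tauto

/-! ### Gray-code bookkeeping along Increment runs -/

/-- `st ℓ f` has `n`-value `n`; its entries sum to an even number when `c = 0` (so `σ = -1`)
and to an odd number when `c = 1` (so `σ = +1`). This is expressed through the parities of the
individual entries: `a_j ≡ ⟨n / 2^j⟩` for `j ≥ 1` and `a_0 ≡ n + c`. -/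
structure Enc (ℓ : ℕ) (f : ℕ → ℤ) (n c : ℕ) : Prop where
  lt : n < 2 ^ ℓ
  zero : Even (f 0 - (n + c))
  pos : ∀ j, 1 ≤ j → j ≤ ℓ → Even (f j - nearest j n)

/-- The entries after a run of Increments that takes `n` to `n'`: `s = 1` if `n` increases,
`s = -1` if it decreases. -/
def mv (s : ℤ) (f : ℕ → ℤ) (n n' : ℕ) (j : ℕ) : ℤ :=
  f j + s * (if j = 0 then -1 else 1) * ((nearest j n' : ℤ) - nearest j n)

lemma mv_self (s f n) : mv s f n n = f := by
  funext j; simp [mv]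

lemma mv_mv (s f n n' n'') : mv s (mv s f n n') n' n'' = mv s f n n'' := by
  funext j; simp only [mv]; ring

lemma mv_zero (s f n n') : mv s f n n' 0 = f 0 - s * ((n' : ℤ) - n) := by
  simp [mv, nearest_zero]; ring

lemma mv_enc {ℓ f n c n'} {s : ℤ} (hs : s = 1 ∨ s = -1) (h : Enc ℓ f n c) (hn : n' < 2 ^ ℓ) :
    Enc ℓ (mv s f n n') n' c := by
  refine ⟨hn, ?_, ?_⟩
  · have := h.zero
    rw [mv_zero]
    rw [Int.even_iff] at *
    rcases hs with rfl | rfl <;> omega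
  · intro j h1 h2
    have := h.pos j h1 h2
    simp only [mv, if_neg (show j ≠ 0 by omega)]
    rw [Int.even_iff] at *
    rcases hs with rfl | rfl <;> omega

lemma Enc.sum_parity {ℓ f n c} (h : Enc ℓ f n c) :
    nOf (st ℓ f) = n ∧ Even ((st ℓ f).sum - f 0 - n) := by
  induction ℓ generalizing f n c with
  | zero =>
    have := h.lt
    simp at this
    subst this
    simp [st_zero, nOf_cons, nOf_nil]
  | succ ℓ ih =>
    -- The tail carries `n / 2`; its parity `c'` is whatever makes the entry `a_1` fit.
    have h1 : Enc ℓ (fun j => f (j + 1)) (n / 2) ((n + 1) / 2 + n / 2) := by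
      refine ⟨?_, ?_, ?_⟩
      · have := h.lt
        rw [pow_succ] at this; omega
      · have := h.pos 1 le_rfl (by omega)
        rw [nearest_one] at this
        rw [Int.even_iff] at *
        simp only [zero_add]
        push_cast at *
        omega
      · intro j hj1 hj2
        have := h.pos (j + 1) (by omega) (by omega)
        obtain ⟨i, rfl⟩ : ∃ i, j = i + 1 := ⟨j - 1, by omega⟩
        rwa [nearest_half] at this
    have ⟨i1, i2⟩ := ih h1
    have h2 := h.pos 1 le_rfl (by omega)
    rw [nearest_one] at h2
    rw [st_succ, nOf_cons, i1, List.sum_cons]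
    simp only [zero_add] at i2
    rw [Int.even_iff] at *
    push_cast at *
    omega

lemma Enc.nOf_eq {ℓ f n c} (h : Enc ℓ f n c) : nOf (st ℓ f) = n := h.sum_parity.1

/-- With `N = n + c`, the rightmost odd entry has index `ν₂(N)`, as long as `N < 2 ^ ℓ`. -/
lemma Enc.first_odd {ℓ f n c} (h : Enc ℓ f n c) (hc : c ≤ 1) (h1 : 1 ≤ n + c)
    (h2 : n + c < 2 ^ ℓ) :
    padicValNat 2 (n + c) < ℓ ∧ Odd (f (padicValNat 2 (n + c))) ∧
      ∀ j < padicValNat 2 (n + c), Even (f j) := by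
  set v := padicValNat 2 (n + c) with hv
  have key : ∀ t, 2 ^ t ∣ n + c ↔ t ≤ v := fun t => padicValNat_dvd_iff_le (by omega)
  have hvl : v < ℓ := by
    have := Nat.le_of_dvd (by omega) ((key v).2 le_rfl)
    exact (Nat.pow_lt_pow_iff_right (by norm_num : 1 < 2)).1 (lt_of_le_of_lt this h2)
  have hpar : ∀ j ≤ v, Even (f j - ((n + c) / 2 ^ j : ℕ)) := by
    intro j hj
    have hd := (key j).2 hj
    rcases Nat.eq_zero_or_pos j with rfl | hj0
    · have := h.zero
      simpa using this
    · have := h.pos j hj0 (by omega)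
      obtain rfl | rfl : c = 0 ∨ c = 1 := by omega
      · rwa [nearest_of_dvd (by simpa using hd)] at this
      · rwa [nearest_of_dvd_succ (by omega) hd] at this
  refine ⟨hvl, ?_, ?_⟩
  · have h3 := hpar v le_rfl
    have h4 : Odd ((n + c) / 2 ^ v) := by
      rw [← Nat.not_even_iff_odd, even_iff_two_dvd]
      intro hd
      have : 2 ^ (v + 1) ∣ n + c := by
        rw [pow_succ]
        exact Nat.mul_dvd_of_dvd_div ((key v).2 le_rfl) hd
      have := (key (v + 1)).1 this
      omega
    rw [Nat.odd_iff] at h4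
    rw [Int.even_iff] at h3
    rw [Int.odd_iff]
    omega
  · intro j hj
    have h3 := hpar j hj.le
    have h4 : Even ((n + c) / 2 ^ j) := by
      rw [even_iff_two_dvd]
      have : 2 ^ j * 2 ∣ n + c := by
        rw [← pow_succ]
        exact (key (j + 1)).2 hj
      exact Nat.dvd_div_of_mul_dvd this
    rw [Nat.even_iff] at h4
    rw [Int.even_iff] at *
    omega

lemma Enc.rule {ℓ f n c} (h : Enc ℓ f n c) (hc : c ≤ 1) (h1 : 1 ≤ n + c) (h2 : n + c < 2 ^ ℓ) :
    ruleOf (st ℓ f) = if f 0 = -1 then Rule.halve else Rule.increment := by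
  obtain ⟨ha, hb, -⟩ := h.first_odd hc h1 h2
  have hne : ¬ ∀ x ∈ st ℓ f, Even x := by
    rw [forall_mem_st]
    intro hh
    exact (Int.not_even_iff_odd.2 hb) (hh _ ha.le)
  unfold ruleOf
  rw [if_neg, if_neg, if_neg, st_headD]
  · exact fun hh => hne hh.1
  · exact fun hh => hne hh.1
  · rw [overflow_iff]
    exact fun hh => (Int.not_even_iff_odd.2 hb) (hh.2 _ ha)

lemma P_increment {ℓ f i} (hi : i < ℓ) (ho : Odd (f i)) (he : ∀ j < i, Even (f j))
    (hr : ruleOf (st ℓ f) = Rule.increment) :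
    P (st ℓ f) = st ℓ (fun j => f j + (if j = 0 then -1 else 0) +
      (if j = i + 1 then 1 else 0)) := by
  unfold P
  rw [hr]
  simp only
  rw [st_findIdx hi.le ho he, st_set, st_set, st_getD (by omega), st_headD]
  apply st_congr
  intro j hj
  simp only [Function.update_apply]
  by_cases hj0 : j = 0
  · subst hj0; simp; ring
  · simp only [hj0, if_false, add_zero]
    split_ifs with h3
    · rw [h3]
    · simp

lemma Enc.step {ℓ f n c} (h : Enc ℓ f n c) (hc : c ≤ 1) (h1 : 1 ≤ n + c) (h2 : n + c < 2 ^ ℓ)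
    (hf : f 0 ≠ -1) :
    P (st ℓ f) = st ℓ (fun j => f j + (if j = 0 then -1 else 0) +
      (if j = padicValNat 2 (n + c) + 1 then 1 else 0)) := by
  obtain ⟨ha, hb, hb'⟩ := h.first_odd hc h1 h2
  have hr := h.rule hc h1 h2
  rw [if_neg hf] at hr
  exact P_increment ha hb hb' hr

lemma Enc.step_down {ℓ f n} (h : Enc ℓ f (n + 1) 0) (hf : f 0 ≠ -1) :
    P (st ℓ f) = st ℓ (mv (-1) f (n + 1) n) := by
  rw [h.step (by omega) (by omega) (by have := h.lt; omega) hf]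
  apply st_congr
  intro j hj
  simp only [mv, nearest_succ_right]
  by_cases hj0 : j = 0
  · subst hj0; simp
  · simp only [hj0, if_false, false_or]
    push_cast
    ring

lemma Enc.step_up {ℓ f n} (h : Enc ℓ f n 1) (hn : n + 1 < 2 ^ ℓ) (hf : f 0 ≠ -1) :
    P (st ℓ f) = st ℓ (mv 1 f n (n + 1)) := by
  rw [h.step (by omega) (by omega) hn hf]
  apply st_congr
  intro j hj
  simp only [mv, nearest_succ_right]
  by_cases hj0 : j = 0
  · subst hj0; simp
  · simp [hj0]

lemma Enc.all_even {ℓ f} (h : Enc ℓ f 0 0) : ∀ j ≤ ℓ, Even (f j) := by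
  intro j hj
  rcases Nat.eq_zero_or_pos j with rfl | h0
  · simpa using h.zero
  · simpa [nearest_zero_right] using h.pos j h0 hj

/-- At `n = 0` with `σ = -1` only the Zero and Halt rules can apply. -/
lemma Enc.rule_bottom {ℓ f} (h : Enc ℓ f 0 0) :
    ruleOf (st ℓ f) ≠ Rule.increment ∧ ruleOf (st ℓ f) ≠ Rule.halve := by
  rw [rule_of_even (forall_mem_st.2 h.all_even)]
  split_ifs <;> simp

/-- At the maximal `n` with `σ = +1` the Overflow rule applies. -/
lemma Enc.rule_top {ℓ f n} (h : Enc ℓ f n 1) (hn : n + 1 = 2 ^ ℓ) :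
    ruleOf (st ℓ f) = Rule.overflow := by
  unfold ruleOf
  rw [if_pos]
  rw [overflow_iff]
  obtain rfl : n = 2 ^ ℓ - 1 := by omega
  have e0 := h.zero
  rcases Nat.eq_zero_or_pos ℓ with rfl | hl
  · refine ⟨?_, by omega⟩
    rw [Int.even_iff] at e0
    rw [Int.odd_iff]
    simp at e0 ⊢
    omega
  · refine ⟨?_, ?_⟩
    · have := h.pos ℓ hl le_rfl
      rw [nearest_top (by omega) le_rfl] at this
      rw [Int.even_iff] at this
      rw [Int.odd_iff]
      simp at this ⊢
      omega
    · intro j hj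
      rcases Nat.eq_zero_or_pos j with rfl | hj0
      · have e1 : Even ((2 : ℤ) ^ ℓ) := (even_two).pow_of_ne_zero (by omega)
        have : ((2 ^ ℓ - 1 : ℕ) : ℤ) + 1 = 2 ^ ℓ := by
          exact_mod_cast hn
        rw [Int.even_iff] at *
        push_cast at *
        omega
      · have := h.pos j hj0 hj.le
        rw [nearest_top (by omega) hj.le] at this
        have e1 : Even ((2 ^ (ℓ - j) : ℕ) : ℤ) := by
          push_cast
          exact (even_two).pow_of_ne_zero (by omega)
        have := this.add e1
        simpa using this

/-- With `σ = -1`, a run of Increments counts `n` down, and it cannot pass `n = 0`. -/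
lemma Enc.run_down {ℓ f n m} (h : Enc ℓ f n 0)
    (hr : ∀ t < m, ruleOf (P^[t] (st ℓ f)) = Rule.increment) :
    m ≤ n ∧ P^[m] (st ℓ f) = st ℓ (mv (-1) f n (n - m)) := by
  induction m with
  | zero => simp [mv_self]
  | succ m ih =>
    obtain ⟨h1, h2⟩ := ih (fun t ht => hr t (by omega))
    have h3 := hr m (by omega)
    have he : Enc ℓ (mv (-1) f n (n - m)) (n - m) 0 :=
      mv_enc (Or.inr rfl) h (by have := h.lt; omega)
    rw [h2] at h3
    have hnm : n - m ≠ 0 := by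
      intro h0
      rw [h0] at he h3
      exact he.rule_bottom.1 h3
    obtain ⟨q, hq⟩ := Nat.exists_eq_succ_of_ne_zero hnm
    rw [Nat.succ_eq_add_one] at hq
    have hq' : n - (m + 1) = q := by omega
    refine ⟨by omega, ?_⟩
    rw [Function.iterate_succ_apply', h2, hq']
    rw [hq] at he h3 ⊢
    have hf : mv (-1) f n (q + 1) 0 ≠ -1 := by
      intro hf
      rw [he.rule (by omega) (by omega) (by have := he.lt; omega), if_pos hf] at h3
      cases h3
    rw [he.step_down hf, mv_mv]

/-- As long as `a_0` has not dropped to `-1`, the countdown proceeds by Increments. -/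
lemma Enc.run_down_rule {ℓ f n} (h : Enc ℓ f n 0) (m : ℕ) (hm : m ≤ n) (hf : (m : ℤ) ≤ f 0 + 1) :
    ∀ t < m, ruleOf (P^[t] (st ℓ f)) = Rule.increment := by
  intro t
  induction t using Nat.strong_induction_on with
  | _ t ih =>
    intro ht
    rw [(h.run_down (m := t) (fun i hi => ih i hi (by omega))).2]
    have he : Enc ℓ (mv (-1) f n (n - t)) (n - t) 0 :=
      mv_enc (Or.inr rfl) h (by have := h.lt; omega)
    rw [he.rule (by omega) (by omega) (by have := he.lt; omega), if_neg]
    rw [mv_zero, Nat.cast_sub (by omega)]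
    omega

/-- With `σ = +1`, a run of Increments counts `n` up, and it cannot pass `2^ℓ - 1`. -/
lemma Enc.run_up {ℓ f n m} (h : Enc ℓ f n 1)
    (hr : ∀ t < m, ruleOf (P^[t] (st ℓ f)) = Rule.increment) :
    n + m < 2 ^ ℓ ∧ P^[m] (st ℓ f) = st ℓ (mv 1 f n (n + m)) := by
  induction m with
  | zero => simp [mv_self, h.lt]
  | succ m ih =>
    obtain ⟨h1, h2⟩ := ih (fun t ht => hr t (by omega))
    have h3 := hr m (by omega)
    have he : Enc ℓ (mv 1 f n (n + m)) (n + m) 1 := mv_enc (Or.inl rfl) h h1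
    rw [h2] at h3
    have hnm : n + m + 1 ≠ 2 ^ ℓ := by
      intro h0
      rw [he.rule_top h0] at h3
      cases h3
    have hlt : n + m + 1 < 2 ^ ℓ := by omega
    refine ⟨by omega, ?_⟩
    have hf : mv 1 f n (n + m) 0 ≠ -1 := by
      intro hf
      rw [he.rule (by omega) (by omega) hlt, if_pos hf] at h3
      cases h3
    rw [Function.iterate_succ_apply', h2, he.step_up hlt hf, mv_mv, add_assoc]

lemma Enc.run_up_rule {ℓ f n} (h : Enc ℓ f n 1) (m : ℕ) (hm : n + m < 2 ^ ℓ)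
    (hf : (m : ℤ) ≤ f 0 + 1) :
    ∀ t < m, ruleOf (P^[t] (st ℓ f)) = Rule.increment := by
  intro t
  induction t using Nat.strong_induction_on with
  | _ t ih =>
    intro ht
    rw [(h.run_up (m := t) (fun i hi => ih i hi (by omega))).2]
    have he : Enc ℓ (mv 1 f n (n + t)) (n + t) 1 := mv_enc (Or.inl rfl) h (by omega)
    rw [he.rule (by omega) (by omega) (by omega), if_neg]
    rw [mv_zero]
    push_cast
    omega

/-- The Halve rule divides `n` by two and flips the sign. -/
lemma Enc.halve {ℓ f n c} (h : Enc (ℓ + 1) f n c) (hc : c ≤ 1)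
    (hr : ruleOf (st (ℓ + 1) f) = Rule.halve) :
    f 0 = -1 ∧ P (st (ℓ + 1) f) = st ℓ (fun j => f (j + 1)) ∧
      Enc ℓ (fun j => f (j + 1)) (n / 2) (1 - c) ∧ (n + c) % 2 = 1 := by
  have h0 : f 0 = -1 := by
    have := rule_halve_head hr
    rwa [st_headD] at this
  have hz := h.zero
  rw [h0, Int.even_iff] at hz
  have hpar : (n + c) % 2 = 1 := by omega
  refine ⟨h0, ?_, ⟨?_, ?_, ?_⟩, hpar⟩
  · unfold P
    rw [hr, st_succ]
    rfl
  · have := h.lt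
    rw [pow_succ] at this; omega
  · have := h.pos 1 le_rfl (by omega)
    rw [nearest_one] at this
    rw [Int.even_iff] at *
    simp only [zero_add]
    push_cast [Nat.cast_sub hc] at *
    omega
  · intro j hj1 hj2
    have := h.pos (j + 1) (by omega) (by omega)
    obtain ⟨i, rfl⟩ : ∃ i, j = i + 1 := ⟨j - 1, by omega⟩
    rwa [nearest_half] at this

/-! ### The trajectory from one empty state to the next -/

/-- The entries of `P (st ℓ f)` when the Zero rule applies. -/
def zeroed (ℓ : ℕ) (f : ℕ → ℤ) (j : ℕ) : ℤ :=
  if j = 0 then f 0 - 1 else if j < ℓ then f j else if j = ℓ then f ℓ + 1 else 0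

lemma P_zero {ℓ f} (hl : 1 ≤ ℓ) (hr : ruleOf (st ℓ f) = Rule.zero) :
    P (st ℓ f) = st (ℓ + 2) (zeroed ℓ f) := by
  have e : leftmost (st ℓ f) = f ℓ := st_getLastD _ _ _
  unfold P
  rw [hr]
  simp only
  rw [e, st_headD, st_set, st_set, st_length, st_snoc, st_snoc, List.append_assoc]
  congr 1
  · apply st_congr
    intro j hj
    simp only [Function.update_apply, zeroed, Nat.add_sub_cancel]
    split_ifs <;> first | rfl | omega
  · simp [zeroed, show ¬ ℓ + 1 + 1 < ℓ by omega, show ¬ ℓ + 1 + 1 = ℓ by omega]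

lemma zeroed_enc {ℓ f} (hl : 1 ≤ ℓ) (he : ∀ j ≤ ℓ, Even (f j)) :
    Enc (ℓ + 2) (zeroed ℓ f) (2 ^ ℓ - 1) 0 := by
  have hp : ((2 ^ ℓ - 1 : ℕ) : ℤ) + 1 = 2 ^ ℓ := by
    exact_mod_cast Nat.sub_add_cancel (Nat.one_le_two_pow (n := ℓ))
  have e1 : Even ((2 : ℤ) ^ ℓ) := (even_two).pow_of_ne_zero (by omega)
  refine ⟨?_, ?_, ?_⟩
  · have := Nat.two_pow_pos ℓ
    rw [pow_add]; omega
  · have := he 0 (by omega)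
    simp only [zeroed, if_true]
    rw [Int.even_iff] at *
    push_cast at *
    omega
  · intro j h1 h2
    simp only [zeroed, if_neg (show j ≠ 0 by omega)]
    split_ifs with h3 h4
    · rw [nearest_top (by omega) h3.le]
      have : Even ((2 ^ (ℓ - j) : ℕ) : ℤ) := by
        push_cast
        exact (even_two).pow_of_ne_zero (by omega)
      exact (he j h3.le).sub this
    · subst h4
      rw [nearest_top (by omega) le_rfl]
      simpa using he j le_rfl
    · rw [nearest_small (by omega)]; simp

/-- The conditions on the entries of an empty state `(f ℓ, …, f 0)` under which two Halve rules
occur before anything but Increments; `h1` and `h2` are the values of `n` right after these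
rules. The first Halve happens at `n = 2 h1 + 1 = 2^ℓ - 1 - f 0`, the second one at
`n = 2 h2 = f 1 + 2^(ℓ-1)`. -/
structure Par (ℓ : ℕ) (f : ℕ → ℤ) (h1 h2 : ℕ) : Prop where
  fst : f 0 + 2 + 2 * h1 = 2 ^ ℓ
  snd : f 1 + 2 ^ (ℓ - 1) = 2 * h2
  nonneg : 0 ≤ f 0
  lt : h2 < 2 ^ ℓ
  le : h1 ≤ 2 * h2

/-- The entries of the next empty state, as a function of the entries `f` and of the values
`h1, h2` of `n` after the two Halve rules. -/
def nextEntry (ℓ : ℕ) (f : ℕ → ℤ) (h1 h2 : ℕ) (j : ℕ) : ℤ :=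
  (if j + 2 < ℓ then f (j + 2) else if j + 2 = ℓ then f ℓ + 1 else 0)
    + nearest (j + 2) (2 ^ ℓ - 1) - 2 * nearest (j + 1) h1
    + if j = 0 then 0 else 2 * nearest j h2

/-- Halve rules occur at times `j₁ < j₂`, and Increments at all other times in `(0, j₂)`. -/
def TwoHalves (E : State) (j₁ j₂ : ℕ) : Prop :=
  0 < j₁ ∧ j₁ < j₂ ∧ ruleOf (P^[j₁] E) = Rule.halve ∧ ruleOf (P^[j₂] E) = Rule.halve ∧
    ∀ t, 0 < t → t < j₂ → t ≠ j₁ → ruleOf (P^[t] E) = Rule.increment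

/-- Two Halve rules force the parameters: up to the second one the state is determined by `f`,
and from there Increments can only lead to the entries `nextEntry`. -/
lemma TwoHalves.run {ℓ f j₁ j₂} (hl : 2 ≤ ℓ) (hz : ruleOf (st ℓ f) = Rule.zero)
    (h : TwoHalves (st ℓ f) j₁ j₂) :
    ∃ h1 h2 g, Par ℓ f h1 h2 ∧ nOf (P^[j₁ + 1] (st ℓ f)) = h1 ∧
      nOf (P^[j₂ + 1] (st ℓ f)) = h2 ∧ P^[j₂ + 1] (st ℓ f) = st ℓ g ∧ Enc ℓ g h2 0 ∧
      ∀ j, mv (-1) g h2 0 j = nextEntry ℓ f h1 h2 j := by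
  obtain ⟨hj1, hj12, hr1, hr2, hr⟩ := h
  have heven := forall_mem_st.1 (rule_zero_even hz)
  have hP := P_zero (by omega : 1 ≤ ℓ) hz
  have hE := zeroed_enc (by omega : 1 ≤ ℓ) heven
  obtain ⟨m, rfl⟩ : ∃ m, j₁ = m + 1 := ⟨j₁ - 1, by omega⟩
  obtain ⟨p, rfl⟩ : ∃ p, j₂ = p + (m + 1 + 1) := ⟨j₂ - (m + 2), by omega⟩
  have hpow : 2 ^ ℓ - 1 + 1 = 2 ^ ℓ := Nat.sub_add_cancel Nat.one_le_two_pow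
  have hpow2 : 2 ^ ℓ = 2 * 2 ^ (ℓ - 1) := by
    rw [← pow_succ', Nat.sub_add_cancel (by omega)]
  obtain ⟨a1, a2⟩ := hE.run_down (m := m) (by
    intro t ht
    have := hr (t + 1) (by omega) (by omega) (by omega)
    rwa [Function.iterate_succ_apply, hP] at this)
  set s1 := 2 ^ ℓ - 1 - m with hs1
  set g1 := mv (-1) (zeroed ℓ f) (2 ^ ℓ - 1) s1 with hg1
  have E1 : Enc (ℓ + 2) g1 s1 0 := mv_enc (Or.inr rfl) hE (by have := hE.lt; omega)
  rw [Function.iterate_succ_apply, hP, a2] at hr1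
  obtain ⟨b1, b2, b3, b4⟩ := E1.halve (by omega) hr1
  have c1 : P^[m + 1 + 1] (st ℓ f) = st (ℓ + 1) (fun j => g1 (j + 1)) := by
    rw [Function.iterate_succ_apply', Function.iterate_succ_apply, hP, a2, b2]
  obtain ⟨h1, hh1⟩ : ∃ h1, s1 = 2 * h1 + 1 := ⟨s1 / 2, by omega⟩
  have hh1' : s1 / 2 = h1 := by omega
  rw [hh1'] at b3
  obtain ⟨d1, d2⟩ := b3.run_up (m := p) (by
    intro t ht
    have := hr (t + (m + 1 + 1)) (by omega) (by omega) (by omega)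
    rwa [Function.iterate_add_apply, c1] at this)
  set s2 := h1 + p with hs2
  set g2 := mv 1 (fun j => g1 (j + 1)) h1 s2 with hg2
  have E2 : Enc (ℓ + 1) g2 s2 1 := mv_enc (Or.inl rfl) b3 d1
  rw [Function.iterate_add_apply, c1, d2] at hr2
  obtain ⟨e1, e2, e3, e4⟩ := E2.halve le_rfl hr2
  have c2 : P^[p + (m + 1 + 1) + 1] (st ℓ f) = st ℓ (fun j => g2 (j + 1)) := by
    rw [Function.iterate_succ_apply', Function.iterate_add_apply, c1, d2, e2]
  obtain ⟨h2, hh2⟩ : ∃ h2, s2 = 2 * h2 := ⟨s2 / 2, by omega⟩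
  have hh2' : s2 / 2 = h2 := by omega
  rw [hh2'] at e3
  have hg10 : g1 0 = f 0 - 1 - m := by
    rw [hg1, mv_zero, hs1, Nat.cast_sub a1]
    simp [zeroed]
  have hg11 : g1 1 = f 1 + 2 ^ (ℓ - 1) - (h1 + 1) := by
    rw [hg1, mv, nearest_top one_ne_zero (by omega), hh1, nearest_one,
      show (2 * h1 + 1 + 1) / 2 = h1 + 1 by omega]
    simp [zeroed, show 1 < ℓ by omega]
    ring
  have hg20 : g2 0 = g1 1 - p := by
    rw [hg2, mv_zero, hs2]
    push_cast
    ring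
  refine ⟨h1, h2, _, ⟨?_, ?_, ?_, e3.lt, by omega⟩, ?_, ?_, c2, e3, ?_⟩
  · rw [b1] at hg10
    have : (2 ^ ℓ : ℤ) = ((2 ^ ℓ : ℕ) : ℤ) := by push_cast; rfl
    rw [this]
    omega
  · rw [e1, hg11] at hg20
    omega
  · omega
  · rw [c1]; exact b3.nOf_eq
  · rw [c2]; exact e3.nOf_eq
  · intro j
    simp only [mv, nearest_zero_right, hg2, hg1, nextEntry, zeroed, hh1, hh2,
      nearest_half, nearest_double]
    simp only [show (2 * h1 + 1) / 2 = h1 by omega]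
    have z1 : nearest (j + 1 + 1) (2 * h1 + 1) = nearest (j + 1) h1 := by
      rw [nearest_half]; congr 1; omega
    by_cases hj : j = 0
    · subst hj
      simp [nearest_zero]
      ring
    · have z2 : nearest (j + 1) (2 * h2) = nearest j h2 := nearest_double _ _
      simp [hj]
      ring

lemma Par.twoHalves {ℓ f h1 h2} (hl : 2 ≤ ℓ) (hz : ruleOf (st ℓ f) = Rule.zero)
    (h : Par ℓ f h1 h2) : ∃ j₁ j₂, TwoHalves (st ℓ f) j₁ j₂ := by
  have heven := forall_mem_st.1 (rule_zero_even hz)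
  have hP := P_zero (by omega : 1 ≤ ℓ) hz
  have hE := zeroed_enc (by omega : 1 ≤ ℓ) heven
  obtain ⟨m, hm⟩ : ∃ m : ℕ, f 0 = m := ⟨(f 0).toNat, by have := h.nonneg; omega⟩
  have hpow : 2 ^ ℓ - 1 + 1 = 2 ^ ℓ := Nat.sub_add_cancel Nat.one_le_two_pow
  have hfst : m + 2 + 2 * h1 = 2 ^ ℓ := by
    have := h.fst
    rw [hm] at this
    exact_mod_cast this
  have hm1 : m ≤ 2 ^ ℓ - 1 := by omega
  have r1 := hE.run_down_rule m hm1 (by simp [zeroed, hm])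
  have a2 := (hE.run_down r1).2
  rw [show 2 ^ ℓ - 1 - m = 2 * h1 + 1 by omega] at a2
  set g1 := mv (-1) (zeroed ℓ f) (2 ^ ℓ - 1) (2 * h1 + 1) with hg1
  have E1 : Enc (ℓ + 2) g1 (2 * h1 + 1) 0 := mv_enc (Or.inr rfl) hE (by have := hE.lt; omega)
  have hg10 : g1 0 = -1 := by
    rw [hg1, mv_zero]
    have : ((2 ^ ℓ - 1 : ℕ) : ℤ) = m + 1 + 2 * h1 := by
      have : 2 ^ ℓ - 1 = m + 1 + 2 * h1 := by omega
      exact_mod_cast this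
    rw [this]
    simp [zeroed, hm]
    ring
  have hg11 : g1 1 = f 1 + 2 ^ (ℓ - 1) - (h1 + 1) := by
    rw [hg1, mv, nearest_top one_ne_zero (by omega), nearest_one,
      show (2 * h1 + 1 + 1) / 2 = h1 + 1 by omega]
    simp [zeroed, show 1 < ℓ by omega]
    ring
  have H1 : ruleOf (st (ℓ + 2) g1) = Rule.halve := by
    rw [E1.rule (by omega) (by omega) E1.lt, if_pos hg10]
  obtain ⟨b1, b2, b3, b4⟩ := E1.halve (by omega) H1
  rw [show (2 * h1 + 1) / 2 = h1 by omega] at b3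
  have c1 : P^[m + 1 + 1] (st ℓ f) = st (ℓ + 1) (fun j => g1 (j + 1)) := by
    rw [Function.iterate_succ_apply', Function.iterate_succ_apply, hP, a2, b2]
  obtain ⟨p, hp⟩ : ∃ p, 2 * h2 = h1 + p := ⟨2 * h2 - h1, by have := h.le; omega⟩
  have hs2 : h1 + p + 1 < 2 ^ (ℓ + 1) := by
    have := h.lt
    rw [pow_succ]; omega
  have hg1p : g1 1 = p - 1 := by
    have := h.snd
    rw [hg11]; omega
  have r2 := b3.run_up_rule p (by omega) (by simp [hg1p])
  have d2 := (b3.run_up r2).2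
  set g2 := mv 1 (fun j => g1 (j + 1)) h1 (h1 + p) with hg2
  have E2 : Enc (ℓ + 1) g2 (h1 + p) 1 := mv_enc (Or.inl rfl) b3 (by omega)
  have hg20 : g2 0 = -1 := by
    rw [hg2, mv_zero]
    simp [hg1p]
  have H2 : ruleOf (st (ℓ + 1) g2) = Rule.halve := by
    rw [E2.rule le_rfl (by omega) hs2, if_pos hg20]
  refine ⟨m + 1, p + (m + 1 + 1), by omega, by omega, ?_, ?_, ?_⟩
  · rw [Function.iterate_succ_apply, hP, a2, H1]
  · rw [Function.iterate_add_apply, c1, d2, H2]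
  · intro t t0 t1 t2
    rcases lt_or_gt_of_ne t2 with t3 | t3
    · obtain ⟨q, rfl⟩ : ∃ q, t = q + 1 := ⟨t - 1, by omega⟩
      rw [Function.iterate_succ_apply, hP]
      exact r1 q (by omega)
    · obtain ⟨q, rfl⟩ : ∃ q, t = q + (m + 1 + 1) := ⟨t - (m + 2), by omega⟩
      rw [Function.iterate_add_apply, c1]
      exact r2 q (by omega)

lemma N_eq {E : State} {m : ℕ} (h : NextEmptyAt E m) : N E = P^[m] E := by
  have hex : ∃ m, NextEmptyAt E m := ⟨m, h⟩
  unfold N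
  rw [dif_pos hex]
  have h' := hex.choose_spec
  set m' := hex.choose
  have : m' = m := by
    rcases lt_trichotomy m' m with h1 | h1 | h1
    · exact absurd h'.2.1 (h.2.2 _ h'.1 h1)
    · exact h1
    · exact absurd h.2.1 (h'.2.2 _ h.1 h1)
  rw [this]

lemma not_isEmpty_of_rule {S : State} (h : ruleOf S ≠ Rule.zero) : ¬ IsEmptyState S :=
  fun hE => h (isEmpty_iff.1 hE).2

/-- If the parameters are admissible and the expected next empty state is again an empty state
with `a_0 ≥ 0`, then no third Halve occurs before reaching it. -/
lemma Par.embanked {ℓ f h1 h2} (hl : 2 ≤ ℓ) (hz : ruleOf (st ℓ f) = Rule.zero)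
    (h : Par ℓ f h1 h2) (h0 : 0 ≤ nextEntry ℓ f h1 h2 0)
    (hz' : ruleOf (st ℓ (nextEntry ℓ f h1 h2)) = Rule.zero) :
    Embanked (st ℓ f) ∧ N (st ℓ f) = st ℓ (nextEntry ℓ f h1 h2) := by
  obtain ⟨j₁, j₂, ht⟩ := h.twoHalves hl hz
  obtain ⟨h1', h2', g, hp', -, -, hg, hE, hG⟩ := ht.run hl hz
  obtain rfl : h1' = h1 := by have := h.fst; have := hp'.fst; omega
  obtain rfl : h2' = h2 := by have := h.snd; have := hp'.snd; omega
  have hr := hE.run_down_rule h2' le_rfl (by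
    have := hG 0
    rw [mv_zero] at this
    push_cast at this
    omega)
  have hend := (hE.run_down hr).2
  rw [Nat.sub_self, st_congr (fun j _ => hG j)] at hend
  obtain ⟨t1, t2, t3, t4, t5⟩ := ht
  have hm : P^[h2' + (j₂ + 1)] (st ℓ f) = st ℓ (nextEntry ℓ f h1' h2') := by
    rw [Function.iterate_add_apply, hg, hend]
  have hinc : ∀ t, 0 < t → t < h2' + (j₂ + 1) → t ≠ j₁ → t ≠ j₂ →
      ruleOf (P^[t] (st ℓ f)) = Rule.increment := by
    intro t a1 a2 a3 a4
    rcases lt_or_gt_of_ne a4 with a5 | a5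
    · exact t5 t a1 a5 a3
    · obtain ⟨q, rfl⟩ : ∃ q, t = q + (j₂ + 1) := ⟨t - (j₂ + 1), by omega⟩
      rw [Function.iterate_add_apply, hg]
      exact hr q (by omega)
  have hne : NextEmptyAt (st ℓ f) (h2' + (j₂ + 1)) := by
    refine ⟨by omega, ?_, ?_⟩
    · rw [hm]; exact isEmpty_iff.2 ⟨st_ne_nil _ _, hz'⟩
    · intro t a1 a2
      apply not_isEmpty_of_rule
      by_cases a3 : t = j₁
      · rw [a3, t3]; decide
      by_cases a4 : t = j₂
      · rw [a4, t4]; decide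
      rw [hinc t a1 a2 a3 a4]; decide
  exact ⟨⟨isEmpty_iff.2 ⟨st_ne_nil _ _, hz⟩, _, j₁, j₂, hne, t1, t2, by omega, t3, t4, hinc⟩,
    (N_eq hne).trans hm⟩

lemma count_halves {E : State} {j₁ j₂ : ℕ} (hz : ruleOf E = Rule.zero)
    (h : TwoHalves E j₁ j₂) :
    hVal E 1 = nOf (P^[j₁ + 1] E) ∧ hVal E 2 = nOf (P^[j₂ + 1] E) := by
  obtain ⟨t1, t2, t3, t4, t5⟩ := h
  set p : ℕ → Prop := fun j => ruleOf (P^[j] E) = Rule.halve with hp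
  have c1 : Nat.count p j₁ = 0 := by
    rw [Nat.count_iff_forall_not]
    intro t ht
    rcases Nat.eq_zero_or_pos t with rfl | h0
    · simp [hp, hz]
    · simp [hp, t5 t h0 (by omega) (by omega)]
  have c2 : Nat.count p j₂ = 1 := by
    obtain ⟨q, rfl⟩ : ∃ q, j₂ = j₁ + 1 + q := ⟨j₂ - (j₁ + 1), by omega⟩
    rw [Nat.count_add, Nat.count_succ, c1, if_pos t3]
    simp only [zero_add]
    have : Nat.count (fun k => p (j₁ + 1 + k)) q = 0 := by
      rw [Nat.count_iff_forall_not]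
      intro t ht
      simp [hp, t5 (j₁ + 1 + t) (by omega) (by omega) (by omega)]
    rw [this]
  have n1 := Nat.nth_count (p := p) t3
  have n2 := Nat.nth_count (p := p) t4
  rw [c1] at n1
  rw [c2] at n2
  constructor
  · unfold hVal; rw [← hp]; simp only [Nat.sub_self]; rw [n1]
  · unfold hVal; rw [← hp]; simp only [Nat.add_one_sub_one]; rw [n2]

lemma embanked_imp {ℓ f} (hl : 2 ≤ ℓ) (h : Embanked (st ℓ f)) :
    ∃ h1 h2, Par ℓ f h1 h2 ∧ N (st ℓ f) = st ℓ (nextEntry ℓ f h1 h2) ∧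
      hVal (st ℓ f) 1 = h1 ∧ hVal (st ℓ f) 2 = h2 := by
  obtain ⟨he, m, j₁, j₂, hm, t1, t2, t3, t4, t5, t6⟩ := h
  have hz := (isEmpty_iff.1 he).2
  have ht : TwoHalves (st ℓ f) j₁ j₂ :=
    ⟨t1, t2, t4, t5, fun t a1 a2 a3 => t6 t a1 (by omega) a3 (by omega)⟩
  obtain ⟨h1, h2, g, hp, n1, n2, hg, hE, hG⟩ := ht.run hl hz
  obtain ⟨c1, c2⟩ := count_halves hz ht
  refine ⟨h1, h2, hp, ?_, c1.trans n1, c2.trans n2⟩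
  rw [N_eq hm]
  obtain ⟨q, rfl⟩ : ∃ q, m = q + (j₂ + 1) := ⟨m - (j₂ + 1), by omega⟩
  obtain ⟨b1, b2⟩ := hE.run_down (m := q) (by
    intro t ht
    have := t6 (t + (j₂ + 1)) (by omega) (by omega) (by omega) (by omega)
    rwa [Function.iterate_add_apply, hg] at this)
  have hmm := hm.2.1
  rw [Function.iterate_add_apply, hg, b2] at hmm ⊢
  have hE' : Enc ℓ (mv (-1) g h2 (h2 - q)) (h2 - q) 0 :=
    mv_enc (Or.inr rfl) hE (by have := hE.lt; omega)
  have := hE'.nOf_eq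
  rw [hmm.2.1] at this
  rw [← this]
  exact st_congr (fun j _ => hG j)

lemma weaklyEmbanked_imp {ℓ f} (hl : 2 ≤ ℓ) (h : WeaklyEmbanked (st ℓ f)) :
    ∃ h1 h2, Par ℓ f h1 h2 := by
  obtain ⟨he, j₁, j₂, t1, t2, -, t4, t5, t6⟩ := h
  have hz := (isEmpty_iff.1 he).2
  obtain ⟨h1, h2, g, hp, -⟩ := TwoHalves.run hl hz ⟨t1, t2, t4, t5, t6⟩
  exact ⟨h1, h2, hp⟩

/-! ### Counting Halve rules by means of sums and lengths -/

/-- The quantity `sum + length`, which is constant under Increment and Halve and grows by `2`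
under Zero and Overflow. -/
def pot (S : State) : ℤ := S.sum + S.length

lemma st_sum (ℓ f) : (st ℓ f).sum = ∑ j ∈ Finset.range (ℓ + 1), f j := by
  induction ℓ with
  | zero => simp [st_zero]
  | succ ℓ ih => rw [st_snoc, List.sum_append, ih, Finset.sum_range_succ _ (ℓ + 1)]; simp

lemma increment_sum {S : State} (hr : ruleOf S = Rule.increment) :
    pot (P S) = pot S ∧ (P S).length = S.length := by
  have hne : ¬ OverflowCond S ∧ ¬ HaltCond S ∧ ¬ ZeroCond S := by
    unfold ruleOf at hr
    split_ifs at hr with h1 h2 h3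
    exact ⟨h1, h2, h3⟩
  obtain ⟨no, nh, nz⟩ := hne
  have hodd : ¬ ∀ x ∈ S, Even x := fun h => nz ⟨h, nh⟩
  have hnil : S ≠ [] := by
    rintro rfl
    simp at hodd
  obtain ⟨ℓ, hℓ⟩ : ∃ ℓ, S.length = ℓ + 1 :=
    ⟨S.length - 1, by have := List.length_pos_of_ne_nil hnil; omega⟩
  obtain ⟨f, rfl⟩ : ∃ f, S = st ℓ f := ⟨_, eq_st hℓ⟩
  rw [forall_mem_st] at hodd
  push Not at hodd
  have hi := Nat.find_spec hodd
  set i := Nat.find hodd with hidef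
  have hmin : ∀ j < i, Even (f j) := by
    intro j hj
    have := Nat.find_min hodd hj
    by_contra hc
    exact this ⟨by omega, hc⟩
  have hio : Odd (f i) := Int.not_even_iff_odd.1 hi.2
  have hil : i < ℓ := by
    rcases lt_or_eq_of_le hi.1 with h | h
    · exact h
    · exact absurd (overflow_iff.2 (h ▸ ⟨hio, hmin⟩)) no
  rw [P_increment hil hio hmin hr]
  refine ⟨?_, by simp⟩
  unfold pot
  rw [st_sum, st_sum, Finset.sum_add_distrib, Finset.sum_add_distrib]
  rw [Finset.sum_ite_eq', Finset.sum_ite_eq', if_pos (by simp), if_pos (by simp; omega)]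
  simp

lemma halve_sum {S : State} (hr : ruleOf S = Rule.halve) :
    pot (P S) = pot S ∧ (P S).length + 1 = S.length := by
  have h := rule_halve_head hr
  unfold P
  rw [hr]
  cases S with
  | nil => simp at h
  | cons a t =>
    simp at h
    subst h
    simp [pot]
    ring

lemma overflow_sum {S : State} (hr : ruleOf S = Rule.overflow) : pot (P S) = pot S + 2 := by
  unfold P
  rw [hr]
  rcases List.eq_nil_or_concat S with rfl | ⟨t, a, rfl⟩
  · exfalso
    unfold ruleOf at hr
    split_ifs at hr with h1
    simp [OverflowCond, leftmost] at h1
  · simp [pot, leftmost]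
    ring

lemma P_nil : P ([] : State) = [0, 0] := by
  have : ruleOf ([] : State) = Rule.zero := by
    rw [rule_of_even (by simp), if_neg]
    simp [HaltCond]
  unfold P
  rw [this]
  simp

lemma rule_00 : ruleOf ([0, 0] : State) = Rule.halt := by
  rw [rule_of_even (by simp), if_pos]
  simp [HaltCond]

lemma iterate_halt {S : State} (h : ruleOf S = Rule.halt) (t : ℕ) : P^[t] S = S := by
  have : P S = S := by unfold P; rw [h]
  exact Function.iterate_fixed this t

/-- In a run of Increments and Halves that shortens the state, there is a first Halve. -/
lemma exists_first_halve {u : ℕ → State} (hu : ∀ t, u (t + 1) = P (u t)) (s d : ℕ)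
    (hr : ∀ t, t < d → ruleOf (u (s + t)) = Rule.increment ∨ ruleOf (u (s + t)) = Rule.halve)
    (hl : (u (s + d)).length < (u s).length) :
    ∃ j < d, ruleOf (u (s + j)) = Rule.halve ∧ (∀ t < j, ruleOf (u (s + t)) = Rule.increment) ∧
      (u (s + j + 1)).length + 1 = (u s).length := by
  have hlen : ∀ q, (∀ t < q, ruleOf (u (s + t)) = Rule.increment) →
      (u (s + q)).length = (u s).length := by
    intro q
    induction q with
    | zero => intro _; rfl
    | succ q ih =>
      intro h
      rw [← add_assoc, hu, (increment_sum (h q (by omega))).2]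
      exact ih (fun t ht => h t (by omega))
  have hex : ∃ j, j < d ∧ ruleOf (u (s + j)) = Rule.halve := by
    by_contra hc
    push Not at hc
    have := hlen d (fun t ht => (hr t ht).resolve_right (hc t ht))
    omega
  have h1 := Nat.find_spec hex
  have hmin : ∀ t < Nat.find hex, ruleOf (u (s + t)) = Rule.increment := fun t ht =>
    (hr t (by omega)).resolve_right (fun h => Nat.find_min hex ht ⟨by omega, h⟩)
  refine ⟨Nat.find hex, h1.1, h1.2, hmin, ?_⟩
  rw [hu, (halve_sum h1.2).2, hlen _ hmin]

/-- If `N F` is obtained from `F` by adding `2` to one entry, then `F` is embanked. Zero and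
Overflow each increase `sum + length` by `2`, whereas `N F` exceeds `F` by `2`; so the initial
Zero is accompanied by no Overflow, and comparing lengths leaves exactly two Halves. -/
lemma embanked_of_next {ℓ F i} (hl : 1 ≤ ℓ) (hlen : F.length = ℓ + 1) (hF : IsEmptyState F)
    (hi : i ≤ ℓ) (hN : N F = bump F i) : Embanked F := by
  obtain ⟨f, rfl⟩ : ∃ f, F = st ℓ f := ⟨_, eq_st hlen⟩
  have hz := (isEmpty_iff.1 hF).2
  rw [st_bump] at hN
  obtain ⟨m, hm⟩ : ∃ m, NextEmptyAt (st ℓ f) m := by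
    by_contra hc
    unfold N at hN
    rw [dif_neg hc] at hN
    exact st_ne_nil _ _ hN.symm
  rw [N_eq hm] at hN
  have hu : ∀ t, P^[t + 1] (st ℓ f) = P (P^[t] (st ℓ f)) := fun t =>
    Function.iterate_succ_apply' P t _
  have hnh : ∀ t ≤ m, ruleOf (P^[t] (st ℓ f)) ≠ Rule.halt := by
    intro t ht h
    have : P^[m] (st ℓ f) = P^[t] (st ℓ f) := by
      conv_lhs => rw [show m = (m - t) + t by omega, Function.iterate_add_apply]
      exact iterate_halt h _
    exact hm.2.1.2.2.2 (this ▸ h)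
  have hnn : ∀ t < m, P^[t] (st ℓ f) ≠ [] := by
    intro t ht h
    apply hnh (t + 1) (by omega)
    rw [hu, h, P_nil, rule_00]
  have hrule : ∀ t, 0 < t → t < m → ruleOf (P^[t] (st ℓ f)) = Rule.increment ∨
      ruleOf (P^[t] (st ℓ f)) = Rule.halve ∨ ruleOf (P^[t] (st ℓ f)) = Rule.overflow := by
    intro t t0 t1
    have a1 := hnh t t1.le
    have a2 : ruleOf (P^[t] (st ℓ f)) ≠ Rule.zero := fun h =>
      hm.2.2 t t0 t1 (isEmpty_iff.2 ⟨hnn t t1, h⟩)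
    cases hR : ruleOf (P^[t] (st ℓ f)) <;> simp_all
  have hpot0 : pot (P (st ℓ f)) = pot (st ℓ f) + 2 := by
    rw [P_zero hl hz]
    have : ∀ j ∈ Finset.range (ℓ + 1), zeroed ℓ f j =
        f j + (if j = 0 then -1 else 0) + (if j = ℓ then 1 else 0) := by
      intro j hj
      simp at hj
      unfold zeroed
      split_ifs <;> (try omega) <;> (simp_all; try ring)
    unfold pot
    rw [st_sum, st_sum, Finset.sum_range_succ, Finset.sum_range_succ, Finset.sum_congr rfl this,
      Finset.sum_add_distrib, Finset.sum_add_distrib, Finset.sum_ite_eq', Finset.sum_ite_eq',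
      if_pos (by simp), if_pos (by simp)]
    simp [zeroed, show ¬ ℓ + 1 + 1 < ℓ by omega]
    ring
  have hpotm : pot (P^[m] (st ℓ f)) = pot (st ℓ f) + 2 := by
    rw [hN]
    unfold pot
    rw [st_sum, st_sum, Finset.sum_add_distrib, Finset.sum_ite_eq',
      if_pos (by simp; omega)]
    simp
    ring
  have hmono : ∀ d s, 0 < s → s + d ≤ m →
      pot (P^[s] (st ℓ f)) ≤ pot (P^[s + d] (st ℓ f)) := by
    intro d
    induction d with
    | zero => intro s _ _; rfl
    | succ d ih =>
      intro s h1 h2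
      have h3 := ih s h1 (by omega)
      rw [← add_assoc, hu]
      rcases hrule (s + d) (by omega) (by omega) with h | h | h
      · rw [(increment_sum h).1]; exact h3
      · rw [(halve_sum h).1]; exact h3
      · rw [overflow_sum h]; omega
  have hrule2 : ∀ t, 0 < t → t < m → ruleOf (P^[t] (st ℓ f)) = Rule.increment ∨
      ruleOf (P^[t] (st ℓ f)) = Rule.halve := by
    intro t t0 t1
    rcases hrule t t0 t1 with h | h | h
    · exact Or.inl h
    · exact Or.inr h
    · exfalso
      have h1 := hmono (t - 1) 1 one_pos (by omega)
      have h2 := hmono (m - (t + 1)) (t + 1) (by omega) (by omega)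
      rw [show 1 + (t - 1) = t by omega] at h1
      rw [show t + 1 + (m - (t + 1)) = m by omega, hu, overflow_sum h, hpotm] at h2
      rw [Function.iterate_one, hpot0] at h1
      omega
  have hm0 := hm.1
  have hl1 : (P^[1] (st ℓ f)).length = ℓ + 3 := by
    rw [Function.iterate_one, P_zero hl hz, st_length]
  have hlm : (P^[m] (st ℓ f)).length = ℓ + 1 := by rw [hN, st_length]
  obtain ⟨a, a1, a2, a3, a4⟩ := exists_first_halve (u := fun t => P^[t] (st ℓ f)) hu 1 (m - 1)
    (fun t ht => hrule2 _ (by omega) (by omega)) (by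
      rw [show 1 + (m - 1) = m by omega, hlm, hl1]; omega)
  rw [hl1] at a4
  obtain ⟨b, b1, b2, b3, b4⟩ := exists_first_halve (u := fun t => P^[t] (st ℓ f)) hu (1 + a + 1)
    (m - (1 + a + 1)) (fun t ht => hrule2 _ (by omega) (by omega)) (by
      rw [show 1 + a + 1 + (m - (1 + a + 1)) = m by omega, hlm]; omega)
  have hlen_anti : ∀ d s, 0 < s → s + d ≤ m →
      (P^[s + d] (st ℓ f)).length ≤ (P^[s] (st ℓ f)).length := by
    intro d
    induction d with
    | zero => intro s _ _; rfl
    | succ d ih =>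
      intro s h1 h2
      have h3 := ih s h1 (by omega)
      rw [← add_assoc, hu]
      rcases hrule2 (s + d) (by omega) (by omega) with h | h
      · rw [(increment_sum h).2]; exact h3
      · have := (halve_sum h).2; omega
  refine ⟨hF, m, 1 + a, 1 + a + 1 + b, hm, by omega, by omega, by omega, a2, b2, ?_⟩
  intro t t0 t1 t2 t3
  rcases lt_trichotomy t (1 + a) with h | h | h
  · have := a3 (t - 1) (by omega)
    rwa [show 1 + (t - 1) = t by omega] at this
  · exact absurd h t2
  · rcases lt_trichotomy t (1 + a + 1 + b) with h' | h' | h'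
    · have := b3 (t - (1 + a + 1)) (by omega)
      rwa [show 1 + a + 1 + (t - (1 + a + 1)) = t by omega] at this
    · exact absurd h' t3
    · refine (hrule2 t t0 t1).resolve_right fun hh => ?_
      have h1 := hlen_anti (t - (1 + a + 1 + b + 1)) (1 + a + 1 + b + 1) (by omega) (by omega)
      have h2 := hlen_anti (m - (t + 1)) (t + 1) (by omega) (by omega)
      rw [show 1 + a + 1 + b + 1 + (t - (1 + a + 1 + b + 1)) = t by omega] at h1
      rw [show t + 1 + (m - (t + 1)) = m by omega, hlm, hu] at h2
      have := (halve_sum hh).2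
      omega

/-! ### The steps `E ↦ N(E)` along the rooted chain -/

/-- The entries of `E[i]`, where `E` has entries `f`. -/
def add2 (f : ℕ → ℤ) (i j : ℕ) : ℤ := f j + if j = i then 2 else 0

lemma bump_st (ℓ f i) : bump (st ℓ f) i = st ℓ (add2 f i) := st_bump

lemma bump_inj {ℓ f i i'} (hi : i ≤ ℓ) (h : bump (st ℓ f) i = bump (st ℓ f) i') : i = i' := by
  rw [bump_st, bump_st] at h
  have := st_inj h i hi
  by_contra hne
  simp [add2, hne] at this

lemma nextEntry_congr {ℓ f g} (h : ∀ j ≤ ℓ, f j = g j) (h1 h2 j : ℕ) :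
    nextEntry ℓ f h1 h2 j = nextEntry ℓ g h1 h2 j := by
  unfold nextEntry
  rw [h ℓ le_rfl]
  by_cases hj : j + 2 < ℓ
  · rw [h (j + 2) hj.le]
  · simp [hj]

lemma Par.congr {ℓ f g h1 h2} (hl : 2 ≤ ℓ) (h : ∀ j ≤ ℓ, f j = g j) (hp : Par ℓ f h1 h2) :
    Par ℓ g h1 h2 := by
  obtain ⟨a, b, c, d, e⟩ := hp
  rw [h 0 (by omega)] at a c
  rw [h 1 (by omega)] at b
  exact ⟨a, b, c, d, e⟩

lemma nextEntry_add2_of_two_le {ℓ i} (f : ℕ → ℤ) (hi : 2 ≤ i) (hil : i ≤ ℓ) (h1 h2 j : ℕ) :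
    nextEntry ℓ (add2 f i) h1 h2 j =
      nextEntry ℓ f h1 h2 j + if j = i - 2 then 2 else 0 := by
  unfold nextEntry add2
  split_ifs <;> omega

lemma nextEntry_add2_zero (ℓ : ℕ) (f : ℕ → ℤ) (h1 h2 j : ℕ) :
    nextEntry ℓ (add2 f 0) h1 h2 j =
      nextEntry ℓ f (h1 + 1) h2 j + if j = padicValNat 2 (h1 + 1) then 2 else 0 := by
  unfold nextEntry add2
  have e : (j + 1 = 0 ∨ j + 1 = padicValNat 2 (h1 + 1) + 1) ↔ j = padicValNat 2 (h1 + 1) := by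
    omega
  simp only [nearest_succ_right (j + 1) h1, e]
  split_ifs <;> first | contradiction | omega

lemma nextEntry_add2_one (ℓ : ℕ) (f : ℕ → ℤ) (h1 h2 j : ℕ) :
    nextEntry ℓ (add2 f 1) h1 (h2 + 1) j =
      nextEntry ℓ f h1 h2 j + if j = padicValNat 2 (h2 + 1) + 1 then 2 else 0 := by
  unfold nextEntry add2
  rw [nearest_succ_right j h2]
  split_ifs <;> omega

/-- `st ℓ f` is an embanked state `E` with nonnegative entries, `h(E) = (h1, h2)` and
`N(E) = E[i]`. The last two conditions say that `h1` and `h2` can only reach the extreme values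
`0` and `2^ℓ - 1` when `i = 0`, respectively `i = 1`. -/
structure Good (ℓ : ℕ) (f : ℕ → ℤ) (h1 h2 i : ℕ) : Prop where
  len : 3 ≤ ℓ
  nonneg : ∀ j ≤ ℓ, 0 ≤ f j
  zero : ruleOf (st ℓ f) = Rule.zero
  par : Par ℓ f h1 h2
  le : i ≤ ℓ
  next : ∀ j ≤ ℓ, nextEntry ℓ f h1 h2 j = add2 f i j
  edge1 : h1 = 0 → i = 0
  edge2 : h2 + 1 = 2 ^ ℓ → i = 1

lemma add2_nonneg {ℓ f} (i : ℕ) (h : ∀ j ≤ ℓ, 0 ≤ f j) : ∀ j ≤ ℓ, 0 ≤ add2 f i j := by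
  intro j hj
  have := h j hj
  unfold add2
  split_ifs <;> omega

lemma add2_zero_rule {ℓ f} (i : ℕ) (hl : 1 ≤ ℓ) (h : ∀ j ≤ ℓ, 0 ≤ f j)
    (hz : ruleOf (st ℓ f) = Rule.zero) : ruleOf (st ℓ (add2 f i)) = Rule.zero := by
  rw [st_isEmpty_iff hl] at hz ⊢
  refine ⟨fun j hj => ?_, ?_⟩
  · unfold add2
    refine (hz.1 j hj).add ?_
    split_ifs
    · exact even_two
    · exact Even.zero
  · have a := h ℓ le_rfl
    have b := h (ℓ - 1) (by omega)
    unfold add2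
    rcases hz.2 with hh | hh
    · left; split_ifs <;> omega
    · right; split_ifs <;> omega

lemma Good.embanked {ℓ f h1 h2 i} (h : Good ℓ f h1 h2 i) :
    Embanked (st ℓ f) ∧ N (st ℓ f) = st ℓ (add2 f i) := by
  have hl := h.len
  have e : st ℓ (nextEntry ℓ f h1 h2) = st ℓ (add2 f i) := st_congr h.next
  rw [← e]
  refine h.par.embanked (by omega) h.zero ?_ ?_
  · rw [h.next 0 (by omega)]
    exact add2_nonneg i h.nonneg 0 (by omega)
  · rw [e]
    exact add2_zero_rule i (by omega) h.nonneg h.zero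

lemma Good.step {ℓ f h1 h2 i h1' h2' i'} (h : Good ℓ f h1 h2 i)
    (hp : Par ℓ (add2 f i) h1' h2') (hi' : i' ≤ ℓ)
    (hn : ∀ j, nextEntry ℓ (add2 f i) h1' h2' j =
      nextEntry ℓ f h1 h2 j + if j = i' then 2 else 0)
    (e1 : h1' = 0 → i' = 0) (e2 : h2' + 1 = 2 ^ ℓ → i' = 1) :
    Good ℓ (add2 f i) h1' h2' i' := by
  have hl := h.len
  refine ⟨hl, add2_nonneg i h.nonneg, add2_zero_rule i (by omega) h.nonneg h.zero, hp, hi', ?_,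
    e1, e2⟩
  intro j hj
  rw [hn, h.next j hj]
  rfl

lemma Good.step_two {ℓ f h1 h2 i} (h : Good ℓ f h1 h2 i) (hi : 2 ≤ i) :
    Good ℓ (add2 f i) h1 h2 (i - 2) := by
  obtain ⟨a, b, c, d, e⟩ := h.par
  have hil := h.le
  refine h.step ⟨?_, ?_, ?_, d, e⟩ (by omega)
    (nextEntry_add2_of_two_le f hi hil h1 h2) (fun e => ?_) (fun e => ?_)
  · simpa [add2, show 0 ≠ i by omega] using a
  · simpa [add2, show 1 ≠ i by omega] using b
  · simpa [add2, show 0 ≠ i by omega] using c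
  · have := h.edge1 e; omega
  · have := h.edge2 e; omega

/-- If `m < 2 ^ ℓ` then `ν₂(m) < ℓ`. -/
lemma padic_lt {m ℓ : ℕ} (hm : m ≠ 0) (h : m < 2 ^ ℓ) : padicValNat 2 m < ℓ := by
  have h1 := Nat.le_of_dvd (by omega) (pow_padicValNat_dvd (p := 2) (n := m))
  exact (Nat.pow_lt_pow_iff_right (by norm_num : 1 < 2)).1 (lt_of_le_of_lt h1 h)

lemma Par.bound {ℓ f h1 h2} (h : Par ℓ f h1 h2) : 2 * h1 + 2 ≤ 2 ^ ℓ := by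
  have a := h.fst
  have b := h.nonneg
  zify
  omega

lemma Good.step_zero {ℓ f h1 h2} (h : Good ℓ f (h1 + 1) h2 0) :
    Good ℓ (add2 f 0) h1 h2 (padicValNat 2 (h1 + 1)) := by
  have hb := h.par.bound
  obtain ⟨a, b, c, d, e⟩ := h.par
  have hl := h.len
  refine h.step ⟨?_, ?_, ?_, d, by omega⟩ (padic_lt (by omega) (by omega)).le
    (nextEntry_add2_zero ℓ f h1 h2) (fun e => ?_) (fun e => ?_)
  · simp only [add2, if_true]; push_cast at a; linarith
  · simpa [add2] using b
  · simp only [add2, if_true]; omega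
  · subst e; simp
  · have := h.edge2 e; omega

lemma Good.step_one {ℓ f h1 h2} (h : Good ℓ f h1 h2 1) (hlt : h2 + 1 < 2 ^ ℓ) :
    Good ℓ (add2 f 1) h1 (h2 + 1) (padicValNat 2 (h2 + 1) + 1) := by
  obtain ⟨a, b, c, d, e⟩ := h.par
  have hl := h.len
  refine h.step ⟨?_, ?_, ?_, hlt, by omega⟩ (padic_lt (by omega) hlt)
    (nextEntry_add2_one ℓ f h1 h2) (fun e => ?_) (fun e => ?_)
  · simpa [add2] using a
  · simp only [add2, if_true]; push_cast; linarith
  · simpa [add2] using c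
  · have := h.edge1 e; omega
  · have : padicValNat 2 (h2 + 1) = 0 := by
      apply padicValNat.eq_zero_of_not_dvd
      have : 2 ∣ 2 ^ ℓ := dvd_pow_self 2 (by omega)
      omega
    omega

/-- If `N(E) = E[i]` admits parameters at all, then it satisfies the same conditions as `E`: the
parameters move by at most one and the index of `N(E)` is again determined. -/
lemma Good.step_any {ℓ f h1 h2 i} (h : Good ℓ f h1 h2 i)
    (hp : ∃ a b, Par ℓ (add2 f i) a b) :
    ∃ h1' h2' i', Good ℓ (add2 f i) h1' h2' i' := by
  have hl := h.len
  obtain ⟨a, b, hab⟩ := hp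
  rcases i with _ | _ | i
  · obtain ⟨c, rfl⟩ : ∃ c, h1 = c + 1 := by
      refine ⟨a, ?_⟩
      have p := hab.fst
      have q := h.par.fst
      simp [add2] at p
      omega
    exact ⟨_, _, _, h.step_zero⟩
  · have : b = h2 + 1 := by
      have p := hab.snd
      have q := h.par.snd
      simp [add2] at p
      omega
    exact ⟨_, _, _, h.step_one (this ▸ hab.lt)⟩
  · exact ⟨_, _, _, h.step_two (by omega)⟩

/-! ### Iterating up to the index `0` or `1` -/

lemma Good.iterate (c : ℕ) : ∀ {ℓ f h1 h2 i}, Good ℓ f h1 h2 i → i / 2 = c →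
    ∃ f', Good ℓ f' h1 h2 (i % 2) ∧ N^[c] (st ℓ f) = st ℓ f' ∧ (i ≤ 1 → f' = f) := by
  induction c with
  | zero =>
    intro ℓ f h1 h2 i h hc
    exact ⟨f, by rwa [show i % 2 = i by omega], rfl, fun _ => rfl⟩
  | succ c ih =>
    intro ℓ f h1 h2 i h hc
    obtain ⟨f', a, b, -⟩ := ih (h.step_two (by omega)) (by omega)
    refine ⟨f', ?_, ?_, by omega⟩
    · rwa [show (i - 2) % 2 = i % 2 by omega] at a
    · rw [Function.iterate_succ_apply, h.embanked.2, b]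

lemma N'_eq {ℓ f i} (hi : i ≤ ℓ) (h : N (st ℓ f) = bump (st ℓ f) i) :
    N' (st ℓ f) = N^[(i + 2) / 2] (st ℓ f) := by
  have hex : ∃ i, i < (st ℓ f).length ∧ N (st ℓ f) = bump (st ℓ f) i :=
    ⟨i, by simp; omega, h⟩
  unfold N'
  rw [dif_pos hex]
  have hspec := hex.choose_spec
  set idx := hex.choose
  rw [bump_inj hi (h.symm.trans hspec.2)]

/-- The map `N'` runs through the states with the same `h1, h2` until the index is `0` or `1`, and then
takes one further step. -/
lemma Good.N' {ℓ f h1 h2 i} (h : Good ℓ f h1 h2 i) :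
    ∃ f', Good ℓ f' h1 h2 (i % 2) ∧ N' (st ℓ f) = st ℓ (add2 f' (i % 2)) ∧
      (i ≤ 1 → f' = f) := by
  obtain ⟨f', a, b, c⟩ := h.iterate (i / 2) rfl
  refine ⟨f', a, ?_, c⟩
  rw [N'_eq h.le (by rw [bump_st]; exact h.embanked.2), show (i + 2) / 2 = i / 2 + 1 by omega,
    Function.iterate_succ_apply', b, a.embanked.2]

/-! ### The initial state -/

/-- The entries of `S_k`. -/
def skEntry (k j : ℕ) : ℤ := if j = 0 then 0 else if j ≤ 2 * k then 2 ^ (2 * k + 1 - j) else 0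

lemma Sk_eq (k : ℕ) : Sk k = st (2 * k + 1) (skEntry k) := by
  rw [st_succ]
  have e : st (2 * k) (fun j => skEntry k (j + 1)) =
      (List.range (2 * k)).map (fun i => (2 : ℤ) ^ (2 * k - i)) ++ [0] := by
    unfold st
    rw [List.range_succ, List.map_append]
    congr 1
    · apply List.map_congr_left
      intro j hj
      have : j < 2 * k := by simpa using hj
      simp [skEntry, show j + 1 ≤ 2 * k by omega]
    · simp [skEntry]
  rw [e]
  rfl

lemma Sk_good {k : ℕ} (hk : 1 ≤ k) :
    Good (2 * k + 1) (skEntry k) (2 ^ (2 * k) - 1) (2 ^ (2 * k)) (2 * k + 1) := by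
  have hp : (((2 ^ (2 * k) - 1 : ℕ)) : ℤ) + 1 = 2 ^ (2 * k) := by
    exact_mod_cast Nat.sub_add_cancel (Nat.one_le_two_pow (n := 2 * k))
  have h4 : 4 ≤ 2 ^ (2 * k) := by
    calc 4 = 2 ^ 2 := by norm_num
      _ ≤ 2 ^ (2 * k) := Nat.pow_le_pow_right two_pos (by omega)
  refine ⟨by omega, ?_, ?_, ⟨?_, ?_, ?_, ?_, by omega⟩, le_rfl, ?_, by omega, ?_⟩
  · intro j _
    unfold skEntry
    split_ifs <;> positivity
  · rw [st_isEmpty_iff (by omega)]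
    refine ⟨fun j _ => ?_, Or.inr ?_⟩
    · unfold skEntry
      split_ifs
      · exact Even.zero
      · exact even_two.pow_of_ne_zero (by omega)
      · exact Even.zero
    · simp [skEntry, show k ≠ 0 by omega]
  · simp only [skEntry, if_true]
    rw [pow_succ]; linarith
  · simp only [skEntry, one_ne_zero, if_false, if_pos (show 1 ≤ 2 * k by omega)]
    push_cast
    ring
  · simp [skEntry]
  · rw [pow_succ]; omega
  · intro j hj
    have n2 : j ≤ 2 * k → nearest j (2 ^ (2 * k)) = 2 ^ (2 * k - j) := fun h => by
      rw [nearest_of_dvd (pow_dvd_pow _ h), Nat.pow_div h two_pos]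
    rcases lt_trichotomy (j + 2) (2 * k + 1) with h | h | h
    · obtain ⟨d, hd⟩ : ∃ d, 2 * k = j + 2 + d := ⟨2 * k - (j + 2), by omega⟩
      unfold nextEntry add2 skEntry
      rw [nearest_top (by omega) h.le, nearest_top (by omega) (by omega), n2 (by omega)]
      simp only [hd, if_pos (show j + 2 < j + 2 + d + 1 by omega),
        if_neg (show j + 2 ≠ 0 by omega), if_pos (show j + 2 ≤ j + 2 + d by omega),
        if_neg (show ¬ j = j + 2 + d + 1 by omega), if_pos (show j ≤ j + 2 + d by omega),
        show j + 2 + d + 1 - (j + 2) = d + 1 by omega, show j + 2 + d - (j + 1) = d + 1 by omega,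
        show j + 2 + d - j = d + 2 by omega, show j + 2 + d + 1 - j = d + 3 by omega]
      rcases Nat.eq_zero_or_pos j with rfl | hj0
      · simp; ring
      · simp only [hj0.ne', if_false]; push_cast; ring
    · obtain rfl : j = 2 * k - 1 := by omega
      unfold nextEntry add2 skEntry
      rw [nearest_top (by omega) h.le, nearest_top (by omega) (by omega), n2 (by omega)]
      simp only [h, lt_irrefl, if_false, if_true,
        show 2 * k + 1 ≠ 0 by omega, show ¬ 2 * k + 1 ≤ 2 * k by omega,
        show 2 * k - 1 ≠ 0 by omega, show 2 * k - 1 ≤ 2 * k by omega,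
        show 2 * k - 1 ≠ 2 * k + 1 by omega, show 2 * k + 1 - (2 * k - 1) = 2 by omega,
        show 2 * k - (2 * k - 1) = 1 by omega, show 2 * k - (2 * k - 1 + 1) = 0 by omega,
        Nat.sub_self]
      norm_num
    · have c1 : nearest (j + 2) (2 ^ (2 * k + 1) - 1) = 0 := nearest_small (by omega)
      have c2 : nearest (j + 1) (2 ^ (2 * k) - 1) = 0 := nearest_small (by omega)
      unfold nextEntry add2 skEntry
      rw [c1, c2]
      rcases (show j = 2 * k ∨ j = 2 * k + 1 by omega) with rfl | rfl
      · rw [n2 le_rfl]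
        simp [show k ≠ 0 by omega]
      · have c3 : nearest (2 * k + 1) (2 ^ (2 * k)) = 1 := by
          rw [nearest_succ]
          apply Nat.div_eq_of_lt_le <;> rw [pow_succ] <;> omega
        rw [c3]
        simp [show ¬ 2 * k + 1 + 2 < 2 * k + 1 by omega]
  · intro h
    exfalso
    rw [pow_succ] at h
    omega

/-! ### Rooted embanked states -/

lemma N_00 : N [0, 0] = [] := by
  unfold N
  rw [dif_neg]
  rintro ⟨m, -, h, -⟩
  rw [iterate_halt rule_00] at h
  exact h.2.2.2 rule_00

lemma N'_00 : N' [0, 0] = [0, 0] := by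
  unfold N'
  rw [dif_neg]
  rintro ⟨i, -, h⟩
  rw [N_00] at h
  have := congrArg List.length h
  simp [bump] at this

/-- Every iterate `N'^e(S_k)` is either on the chain, or a dead end that `N'` fixes. -/
lemma chain {k : ℕ} (hk : 1 ≤ k) (e : ℕ) :
    (∃ f h1 h2 i, N'^[e] (Sk k) = st (2 * k + 1) f ∧ Good (2 * k + 1) f h1 h2 i) ∨
    ((N'^[e] (Sk k)).length = 2 * k + 1 + 1 ∧ IsEmptyState (N'^[e] (Sk k)) ∧
      ¬ Embanked (N'^[e] (Sk k))) := by
  induction e with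
  | zero => exact Or.inl ⟨_, _, _, _, Sk_eq k, Sk_good hk⟩
  | succ e ih =>
    rw [Function.iterate_succ_apply']
    rcases ih with ⟨f, h1, h2, i, he, hg⟩ | ⟨a, b, c⟩
    · rw [he]
      obtain ⟨f', g1, g2, -⟩ := hg.N'
      rw [g2]
      by_cases hp : ∃ a b, Par (2 * k + 1) (add2 f' (i % 2)) a b
      · obtain ⟨_, _, _, hh⟩ := g1.step_any hp
        exact Or.inl ⟨_, _, _, _, rfl, hh⟩
      · refine Or.inr ⟨by simp, isEmpty_iff.2 ⟨st_ne_nil _ _,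
          add2_zero_rule _ (by omega) g1.nonneg g1.zero⟩, fun hE => hp ?_⟩
        obtain ⟨x, y, hxy, -⟩ := embanked_imp (by omega) hE
        exact ⟨x, y, hxy⟩
    · right
      have : N' (N'^[e] (Sk k)) = N'^[e] (Sk k) := by
        conv_lhs => rw [Skelet17.N']
        rw [dif_neg]
        rintro ⟨i, hi, h⟩
        exact c (embanked_of_next (by omega) a b (by omega) h)
      rw [this]
      exact ⟨a, b, c⟩

lemma RootedEmbanked.good {k : ℕ} {E : State} (h : RootedEmbanked k E) :
    1 ≤ k ∧ ∃ f h1 h2 i, E = st (2 * k + 1) f ∧ Good (2 * k + 1) f h1 h2 i := by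
  obtain ⟨hE, e, he⟩ := h
  rcases Nat.eq_zero_or_pos k with rfl | hk
  · exfalso
    have : Sk 0 = [0, 0] := by simp [Sk]
    rw [this, Function.iterate_fixed N'_00] at he
    exact hE.1.2.2.2 (he ▸ rule_00)
  · refine ⟨hk, ?_⟩
    rcases chain hk e with ⟨f, h1, h2, i, h, hg⟩ | ⟨-, -, c⟩
    · exact ⟨f, h1, h2, i, he ▸ h, hg⟩
    · exact absurd (he ▸ hE) c

/-- `N'(E)` is again rooted embanked, and its index is the parity of the index of `E`. -/
lemma Good.rooted {k f h1 h2 i} (h : Good (2 * k + 1) f h1 h2 i)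
    (hR : RootedEmbanked k (st (2 * k + 1) f))
    (hw : WeaklyEmbanked (N (st (2 * k + 1) f))) :
    RootedEmbanked k (Skelet17.N' (st (2 * k + 1) f)) ∧
      ∃ F', IsEmptyState F' ∧ N F' = Skelet17.N' (st (2 * k + 1) f) ∧
        bump F' (i % 2) = Skelet17.N' (st (2 * k + 1) f) := by
  have hl := h.len
  obtain ⟨f', g1, g2, g3⟩ := h.N'
  have hE : Embanked (st (2 * k + 1) (add2 f' (i % 2))) := by
    obtain ⟨_, _, _, hh⟩ : ∃ a b c, Good (2 * k + 1) (add2 f' (i % 2)) a b c := by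
      rcases Nat.lt_or_ge 1 i with hi | hi
      · rcases Nat.mod_two_eq_zero_or_one i with hr | hr <;> rw [hr] at g1 ⊢
        · obtain ⟨c, rfl⟩ : ∃ c, h1 = c + 1 := Nat.exists_eq_succ_of_ne_zero
            (fun e => by have := h.edge1 e; omega)
          exact ⟨_, _, _, g1.step_zero⟩
        · have := h.par.lt
          exact ⟨_, _, _, g1.step_one (lt_of_le_of_ne this
            (fun e => by have := h.edge2 e; omega))⟩
      · apply g1.step_any
        rw [h.embanked.2] at hw
        rw [g3 hi, show i % 2 = i by omega]
        exact weaklyEmbanked_imp (by omega) hw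
    exact hh.embanked.1
  refine ⟨⟨g2 ▸ hE, ?_⟩, st _ f', g1.embanked.1.1, ?_, ?_⟩
  · obtain ⟨-, e, he⟩ := hR
    exact ⟨e + 1, by rw [Function.iterate_succ_apply', he]⟩
  · rw [g2, g1.embanked.2]
  · rw [g2, bump_st]

/-- The parameters of `F` determine those of `E = F[i]`, and hence the index of `E`. -/
lemma Good.index {ℓ f h1 h2 i' fF a b i} (h : Good ℓ f h1 h2 i') (hi : i = 0 ∨ i = 1)
    (hp : Par ℓ fF a b) (hf : ∀ j ≤ ℓ, f j = add2 fF i j)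
    (hn : ∀ j ≤ ℓ, nextEntry ℓ fF a b j = f j) :
    (i = 0 → i' = padicValNat 2 a) ∧ (i = 1 → i' = padicValNat 2 (b + 1) + 1) := by
  have hl := h.len
  have p1 := hp.fst
  have p2 := hp.snd
  obtain ⟨q1, q2, -, -, -⟩ := h.par
  have hne := h.next i' h.le
  have hni := hn i' h.le
  rw [nextEntry_congr hf] at hne
  rw [hf 0 (by omega)] at q1
  rw [hf 1 (by omega)] at q2
  refine ⟨?_, ?_⟩ <;> rintro rfl
  · simp [add2] at q1 q2
    obtain rfl : a = h1 + 1 := by omega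
    obtain rfl : h2 = b := by omega
    rw [nextEntry_add2_zero, hni] at hne
    by_contra hc
    simp [add2, hc] at hne
  · simp [add2] at q1 q2
    obtain rfl : a = h1 := by omega
    obtain rfl : h2 = b + 1 := by omega
    rw [nextEntry_add2_one, hni] at hne
    by_contra hc
    simp [add2, hc] at hne

/-- Let `i ∈ {0,1}` and let `E` be an `i`-rooted embanked state (so `E` is
rooted embanked and `E = N⁻¹(E)[i]`, witnessed by a predecessor `F`) with
`h(N⁻¹(E)) = (h₁, h₂)`, and assume `N(E)` is weakly embanked.  Then `N(E) = E[ν₂(h₁)]` if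
`i = 0` and `N(E) = E[ν₂(h₂+1)+1]` if `i = 1`; consequently `N'(E)` is
`(ν₂(h₁) mod 2)`-rooted embanked if `i = 0`, and `((ν₂(h₂+1)+1) mod 2)`-rooted embanked
if `i = 1`. -/
theorem statement_10 (k : ℕ) (i : ℕ) (hi : i = 0 ∨ i = 1) (E F : State)
    (hRE : RootedEmbanked k E)
    (hF : IsEmptyState F) (hNF : N F = E) (hFi : bump F i = E)
    (h₁ h₂ : ℕ) (hh₁ : hVal F 1 = h₁) (hh₂ : hVal F 2 = h₂)
    (hw : WeaklyEmbanked (N E)) :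
    (i = 0 → N E = bump E (padicValNat 2 h₁) ∧
      RootedEmbanked k (N' E) ∧
      ∃ F', IsEmptyState F' ∧ N F' = N' E ∧ bump F' (padicValNat 2 h₁ % 2) = N' E) ∧
    (i = 1 → N E = bump E (padicValNat 2 (h₂ + 1) + 1) ∧
      RootedEmbanked k (N' E) ∧
      ∃ F', IsEmptyState F' ∧ N F' = N' E ∧
        bump F' ((padicValNat 2 (h₂ + 1) + 1) % 2) = N' E) := by
  obtain ⟨hk, f, H1, H2, i', rfl, hg⟩ := hRE.good
  have hl := hg.len
  have hlen : F.length = 2 * k + 1 + 1 := by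
    have := congrArg List.length hFi
    simpa [bump] using this
  have hFE := embanked_of_next (by omega) hlen hF (by omega) (hNF.trans hFi.symm)
  obtain ⟨g, rfl⟩ : ∃ g, F = st (2 * k + 1) g := ⟨_, eq_st hlen⟩
  obtain ⟨a, b, hp, hn, ha, hb⟩ := embanked_imp (by omega) hFE
  obtain rfl : a = h₁ := ha.symm.trans hh₁
  obtain rfl : b = h₂ := hb.symm.trans hh₂
  rw [bump_st] at hFi
  have hidx := hg.index hi hp (st_inj hFi.symm) (st_inj (hn.symm.trans hNF))
  have hN := hg.embanked.2
  rw [← bump_st] at hN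
  obtain ⟨r1, r2⟩ := hg.rooted hRE hw
  refine ⟨fun h0 => ?_, fun h0 => ?_⟩
  · rw [← hidx.1 h0]
    exact ⟨hN, r1, r2⟩
  · rw [← hidx.2 h0]
    exact ⟨hN, r1, r2⟩

end Skelet17
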